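/- arXiv:2209.05820 — 10 statements merged into one kernel-verified Lean document; each statement's English description precedes it below -/
import Mathlib

section
/- The map φ₂ is an order automorphism of (D, ⊑). Here φ₂ sends a digraph G to the digraph on the same vertex set obtained as follows: for every pair of distinct vertices u, v such that neither u nor v carries a loop and the edges (u,v) and (v,u) are either both present or both absent, toggle both of these edges; all loops and all other adjacencies are unchanged. φ₂ is well defined on isomorphism classes and so gives a map D → D. -/
/-- A finite digraph: a finite nonempty vertex set `Fin n` with a (Bool-valued)
edge relation, loops allowed. -/
structure FinDigraph where
  n : ℕ
  pos : 0 < n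
  adj : Fin n → Fin n → Bool

namespace FinDigraph

/-- Isomorphism of finite digraphs. -/
def Iso (G H : FinDigraph) : Prop :=
  ∃ e : Fin G.n ≃ Fin H.n, ∀ u v, H.adj (e u) (e v) = G.adj u v

theorem iso_refl (G : FinDigraph) : Iso G G := ⟨Equiv.refl _, fun _ _ => rfl⟩

theorem iso_symm {G H : FinDigraph} (h : Iso G H) : Iso H G := by
  obtain ⟨e, he⟩ := h
  refine ⟨e.symm, fun u v => ?_⟩
  rw [← he (e.symm u) (e.symm v), e.apply_symm_apply, e.apply_symm_apply]

theorem iso_trans {G H K : FinDigraph} (hGH : Iso G H) (hHK : Iso H K) : Iso G K := by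
  obtain ⟨e, he⟩ := hGH
  obtain ⟨f, hf⟩ := hHK
  exact ⟨e.trans f, fun u v => (hf (e u) (e v)).trans (he u v)⟩

instance isoSetoid : Setoid FinDigraph :=
  ⟨Iso, iso_refl, fun h => iso_symm h, fun h h' => iso_trans h h'⟩

/-- `Emb G H` : `G` is isomorphic to an induced subdigraph of `H`. -/
def Emb (G H : FinDigraph) : Prop :=
  ∃ f : Fin G.n ↪ Fin H.n, ∀ u v, H.adj (f u) (f v) = G.adj u v

end FinDigraph

/-- `D`: the isomorphism classes of finite digraphs. -/
def D : Type := Quotient FinDigraph.isoSetoid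

/-- The isomorphism class of a finite digraph. -/
def toD (G : FinDigraph) : D := Quotient.mk _ G

/-- The substructure (induced subdigraph) ordering `⊑` on `D`. -/
instance : LE D :=
  ⟨fun x y => ∃ G H : FinDigraph, x = toD G ∧ y = toD H ∧ FinDigraph.Emb G H⟩

/-- An order automorphism: a bijection such that `x ≤ y ↔ f x ≤ f y`. -/
def IsOrderAuto {α : Type*} [LE α] (f : α → α) : Prop :=
  Function.Bijective f ∧ ∀ x y : α, x ≤ y ↔ f x ≤ f y

/-- φ₁ on digraphs: complement the loop status of every vertex. -/
def phi1Fn (G : FinDigraph) : FinDigraph :=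
  ⟨G.n, G.pos, fun u v => if u = v then !(G.adj u v) else G.adj u v⟩

/-- Edge reversal: transpose the edge relation. -/
def revFn (G : FinDigraph) : FinDigraph :=
  ⟨G.n, G.pos, fun u v => G.adj v u⟩

/-- φ₂ on digraphs: toggle both edges between distinct loopless vertices joined
by both or neither of the two possible edges. -/
def phi2Fn (G : FinDigraph) : FinDigraph :=
  ⟨G.n, G.pos, fun u v =>
    if u ≠ v ∧ G.adj u u = false ∧ G.adj v v = false ∧ G.adj u v = G.adj v u then
      !(G.adj u v)
    else G.adj u v⟩

/-- φ₃ on digraphs: toggle both edges between distinct looped vertices joined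
by both or neither of the two possible edges. -/
def phi3Fn (G : FinDigraph) : FinDigraph :=
  ⟨G.n, G.pos, fun u v =>
    if u ≠ v ∧ G.adj u u = true ∧ G.adj v v = true ∧ G.adj u v = G.adj v u then
      !(G.adj u v)
    else G.adj u v⟩

/-- φ₄ on digraphs: reverse the single edge between distinct loopless vertices
joined by exactly one of the two possible edges. -/
def phi4Fn (G : FinDigraph) : FinDigraph :=
  ⟨G.n, G.pos, fun u v =>
    if u ≠ v ∧ G.adj u u = false ∧ G.adj v v = false ∧ G.adj u v ≠ G.adj v u then
      G.adj v u
    else G.adj u v⟩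

/-- φ₅ on digraphs: reverse the single edge between distinct looped vertices
joined by exactly one of the two possible edges. -/
def phi5Fn (G : FinDigraph) : FinDigraph :=
  ⟨G.n, G.pos, fun u v =>
    if u ≠ v ∧ G.adj u u = true ∧ G.adj v v = true ∧ G.adj u v ≠ G.adj v u then
      G.adj v u
    else G.adj u v⟩

/-- φ_π on digraphs: for each ordered pair `(u,v)` of distinct vertices with a loop at
`u` and no loop at `v`, replace its type `(Adj(u,v), Adj(v,u)) : Bool × Bool` by `π`
applied to it; everything else is unchanged. -/
def phiPiFn (π : Equiv.Perm (Bool × Bool)) (G : FinDigraph) : FinDigraph :=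
  ⟨G.n, G.pos, fun u v =>
    if u = v then G.adj u v
    else if G.adj u u = true ∧ G.adj v v = false then (π (G.adj u v, G.adj v u)).1
    else if G.adj u u = false ∧ G.adj v v = true then (π (G.adj v u, G.adj u v)).2
    else G.adj u v⟩

/-- The number of vertices of an isomorphism class. -/
def nVerts : D → ℕ :=
  Quotient.lift (fun G : FinDigraph => G.n) (fun _ _ h => by
    obtain ⟨e, -⟩ := h
    simpa using Fintype.card_congr e)

/-- `Dn n`: the classes of digraphs with at most `n` vertices (first `n` levels). -/
def Dn (n : ℕ) : Set D := {x : D | nVerts x ≤ n}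

theorem mem_Dn_succ {n : ℕ} {x : D} (h : x ∈ Dn n) : x ∈ Dn (n + 1) :=
  le_trans h (Nat.le_succ n)

/-- The set of lower covers of `x` in `(D, ⊑)`. -/
def lcov (x : D) : Set D :=
  {y : D | y ≤ x ∧ y ≠ x ∧ ∀ z : D, y ≤ z → z ≤ x → z = y ∨ z = x}

/-- `scount x` = number of classes sharing the lower-cover set of `x`. -/
noncomputable def scount (x : D) : ℕ := Nat.card {y : D // lcov y = lcov x}

/-- `Hset m` = `{(l(G), s(G)) : G ∈ D with exactly m vertices}`. -/
def Hset (m : ℕ) : Set (Set D × ℕ) :=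
  {p : Set D × ℕ | ∃ x : D, nVerts x = m ∧ p = (lcov x, scount x)}

/-- Element-wise action of a map of `Dn n` on a subset of `Dn n`. -/
def setImage {n : ℕ} (φ : ↥(Dn n) → ↥(Dn n)) (S : Set D) : Set D :=
  {z : D | ∃ (y : D) (h : y ∈ Dn n), y ∈ S ∧ z = ↑(φ ⟨y, h⟩)}

/-- Element-wise action of a map of `Dn n` on a set of pairs `(S, k)`. -/
def HsetImage {n : ℕ} (φ : ↥(Dn n) → ↥(Dn n)) (A : Set (Set D × ℕ)) : Set (Set D × ℕ) :=
  {p : Set D × ℕ | ∃ q ∈ A, p = (setImage φ q.1, q.2)}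

/-- The swap permutation `σ(a,b) = (b,a)` of `Bool × Bool`. -/
def sigmaSwap : Equiv.Perm (Bool × Bool) := Equiv.prodComm Bool Bool

/-- Restrictions to `D₃` of order automorphisms of `(D, ⊑)`. -/
def Aut3D : Set (↥(Dn 3) → ↥(Dn 3)) :=
  {g | ∃ φ : D → D, IsOrderAuto φ ∧ ∀ x : ↥(Dn 3), (↑(g x) : D) = φ ↑x}

/-- Restrictions to `D₃` of order automorphisms of `D₄`. -/
def Aut3D4 : Set (↥(Dn 3) → ↥(Dn 3)) :=
  {g | ∃ ψ : ↥(Dn 4) → ↥(Dn 4), IsOrderAuto ψ ∧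
    ∀ x : ↥(Dn 3), (↑(g x) : D) = ↑(ψ ⟨↑x, mem_Dn_succ x.2⟩)}

/-- Restrictions to `D₃` of order automorphisms of `D₄`, as order isomorphisms of `D₃`. -/
def Aut3D4Iso : Set (↥(Dn 3) ≃o ↥(Dn 3)) :=
  {g | ∃ ψ : ↥(Dn 4) → ↥(Dn 4), IsOrderAuto ψ ∧
    ∀ x : ↥(Dn 3), ((g x : ↥(Dn 3)) : D) = ↑(ψ ⟨↑x, mem_Dn_succ x.2⟩)}

theorem phi2Fn_adj_map {G H : FinDigraph} (f : Fin G.n → Fin H.n)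
    (hf : Function.Injective f) (h : ∀ u v, H.adj (f u) (f v) = G.adj u v) (u v : Fin G.n) :
    (phi2Fn H).adj (f u) (f v) = (phi2Fn G).adj u v := by
  simp only [phi2Fn, h, ne_eq, hf.eq_iff]

theorem phi2Fn_invol (G : FinDigraph) : phi2Fn (phi2Fn G) = G := by
  obtain ⟨n, p, a⟩ := G
  simp only [phi2Fn]
  congr 1
  funext u v
  by_cases huv : u = v
  · simp [huv]
  · have hvu : ¬ v = u := fun h => huv h.symm
    rcases Bool.eq_false_or_eq_true (a u u) with h1 | h1 <;> rcases Bool.eq_false_or_eq_true (a v v) with h2 | h2 <;> rcases Bool.eq_false_or_eq_true (a u v) with h3 | h3 <;> rcases Bool.eq_false_or_eq_true (a v u) with h4 | h4 <;>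
      simp [huv, hvu, h1, h2, h3, h4]

/-- φ₂ is well defined on isomorphism classes and is an order
automorphism of `(D, ⊑)`. -/
theorem phi2_isOrderAuto :
    ∃ φ : D → D, (∀ G : FinDigraph, φ (toD G) = toD (phi2Fn G)) ∧ IsOrderAuto φ := by
  let φ : D → D := Quotient.lift (fun G => toD (phi2Fn G)) (by
    rintro G H ⟨e, he⟩
    exact Quotient.sound ⟨e, phi2Fn_adj_map e e.injective he⟩)
  have hφ : ∀ G, φ (toD G) = toD (phi2Fn G) := fun _ => rfl
  have hinv : Function.Involutive φ := by
    intro x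
    obtain ⟨G, rfl⟩ : ∃ G, toD G = x := Quotient.exists_rep x
    rw [hφ, hφ, phi2Fn_invol]
  have hmono : ∀ x y : D, x ≤ y → φ x ≤ φ y := by
    rintro x y ⟨G, H, rfl, rfl, f, hf⟩
    exact ⟨phi2Fn G, phi2Fn H, rfl, rfl, f, phi2Fn_adj_map f f.injective hf⟩
  refine ⟨φ, hφ, hinv.bijective, fun x y => ⟨hmono x y, fun h => ?_⟩⟩
  have := hmono _ _ h
  rwa [hinv x, hinv y] at this
end

section
/- The map φ₃ is an order automorphism of (D, ⊑). Here φ₃ sends a digraph G to the digraph on the same vertex set obtained as follows: for every pair of distinct vertices u, v such that both u and v carry a loop and the edges (u,v) and (v,u) are either both present or both absent, toggle both of these edges; all loops and all other adjacencies are unchanged. φ₃ is well defined on isomorphism classes and so gives a map D → D. -/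
theorem phi3_map_adj {G H : FinDigraph} (f : Fin G.n → Fin H.n) (hf : Function.Injective f)
    (h : ∀ u v, H.adj (f u) (f v) = G.adj u v) (u v : Fin G.n) :
    (phi3Fn H).adj (f u) (f v) = (phi3Fn G).adj u v := by
  simp only [phi3Fn, h, ne_eq, hf.eq_iff]

theorem phi3_emb {G H : FinDigraph} (h : FinDigraph.Emb G H) :
    FinDigraph.Emb (phi3Fn G) (phi3Fn H) := by
  obtain ⟨f, hf⟩ := h
  exact ⟨f, phi3_map_adj f f.injective hf⟩

theorem phi3_iso {G H : FinDigraph} (h : FinDigraph.Iso G H) :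
    FinDigraph.Iso (phi3Fn G) (phi3Fn H) := by
  obtain ⟨f, hf⟩ := h
  exact ⟨f, phi3_map_adj f f.injective hf⟩

def tog3 {n : ℕ} (a : Fin n → Fin n → Bool) (u v : Fin n) : Bool :=
  if u ≠ v ∧ a u u = true ∧ a v v = true ∧ a u v = a v u then !(a u v) else a u v

theorem tog3_invol {n : ℕ} (a : Fin n → Fin n → Bool) : tog3 (tog3 a) = a := by
  funext u v
  have hd : ∀ w, tog3 a w w = a w w := fun w => by simp [tog3]
  by_cases huv : u = v
  · subst huv
    rw [tog3, if_neg (fun h => h.1 rfl), hd]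
  · have hvu : ¬ v = u := fun h => huv h.symm
    rw [tog3, hd, hd]
    cases h1 : a u u <;> cases h2 : a v v <;> cases h3 : a u v <;> cases h4 : a v u <;>
      simp [tog3, huv, hvu, h1, h2, h3, h4]

theorem phi3_invol (G : FinDigraph) : phi3Fn (phi3Fn G) = G := by
  obtain ⟨n, p, a⟩ := G
  exact congrArg (FinDigraph.mk n p) (tog3_invol a)

/-- φ₃ is well defined on isomorphism classes and is an order
automorphism of `(D, ⊑)`. -/
theorem phi3_isOrderAuto :
    ∃ φ : D → D, (∀ G : FinDigraph, φ (toD G) = toD (phi3Fn G)) ∧ IsOrderAuto φ := by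
  let φ : D → D := Quotient.lift (fun G => toD (phi3Fn G))
    (fun _ _ h => Quotient.sound (phi3_iso h))
  have hφ : ∀ G : FinDigraph, φ (toD G) = toD (phi3Fn G) := fun _ => rfl
  have hinv : Function.Involutive φ := by
    intro x
    induction x using Quotient.inductionOn with
    | h G => exact congrArg toD (phi3_invol G)
  have hmono : ∀ x y : D, x ≤ y → φ x ≤ φ y := by
    rintro _ _ ⟨G, H, rfl, rfl, h⟩
    exact ⟨phi3Fn G, phi3Fn H, rfl, rfl, phi3_emb h⟩
  refine ⟨φ, hφ, hinv.bijective, fun x y => ⟨hmono x y, fun h => ?_⟩⟩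
  have h2 := hmono _ _ h
  rwa [hinv x, hinv y] at h2
end

section
/- The map φ₄ is an order automorphism of (D, ⊑). Here φ₄ sends a digraph G to the digraph on the same vertex set obtained as follows: for every pair of distinct vertices u, v such that neither u nor v carries a loop and exactly one of the edges (u,v), (v,u) is present, reverse that edge; all loops and all other adjacencies are unchanged. φ₄ is well defined on isomorphism classes and so gives a map D → D. -/
theorem phi4_adj_map {G H : FinDigraph} (f : Fin G.n → Fin H.n) (hf : Function.Injective f)
    (h : ∀ u v, H.adj (f u) (f v) = G.adj u v) (u v : Fin G.n) :
    (phi4Fn H).adj (f u) (f v) = (phi4Fn G).adj u v := by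
  simp only [phi4Fn, h, ne_eq, hf.eq_iff]

theorem phi4_iso {G H : FinDigraph} (h : FinDigraph.Iso G H) :
    FinDigraph.Iso (phi4Fn G) (phi4Fn H) := by
  obtain ⟨e, he⟩ := h
  exact ⟨e, fun u v => phi4_adj_map e e.injective he u v⟩

theorem phi4_emb {G H : FinDigraph} (h : FinDigraph.Emb G H) :
    FinDigraph.Emb (phi4Fn G) (phi4Fn H) := by
  obtain ⟨e, he⟩ := h
  exact ⟨e, fun u v => phi4_adj_map e e.injective he u v⟩

theorem phi4_invol (G : FinDigraph) : phi4Fn (phi4Fn G) = G := by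
  obtain ⟨n, pos, adj⟩ := G
  unfold phi4Fn
  refine congrArg (FinDigraph.mk n pos) ?_
  funext u v
  change Fin n at u v
  dsimp only
  by_cases huv : u = v
  · subst huv; simp
  · have hvu : ¬ v = u := fun h => huv h.symm
    rcases Bool.eq_false_or_eq_true (adj u u) with h1 | h1 <;>
    rcases Bool.eq_false_or_eq_true (adj v v) with h2 | h2 <;>
    rcases Bool.eq_false_or_eq_true (adj u v) with h3 | h3 <;>
    rcases Bool.eq_false_or_eq_true (adj v u) with h4 | h4 <;>
      simp [huv, hvu, h1, h2, h3, h4]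

/-- φ₄ is well defined on isomorphism classes and is an order
automorphism of `(D, ⊑)`. -/
theorem phi4_isOrderAuto :
    ∃ φ : D → D, (∀ G : FinDigraph, φ (toD G) = toD (phi4Fn G)) ∧ IsOrderAuto φ := by
  let φ : D → D := Quotient.lift (fun G => toD (phi4Fn G))
    (fun _ _ h => Quotient.sound (phi4_iso h))
  have hφ : ∀ G : FinDigraph, φ (toD G) = toD (phi4Fn G) := fun _ => rfl
  have hinv : Function.Involutive φ := by
    intro x
    induction x using Quotient.inductionOn with
    | h G =>
      change φ (φ (toD G)) = toD G
      rw [hφ, hφ, phi4_invol]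
  have hmono : ∀ x y : D, x ≤ y → φ x ≤ φ y := by
    rintro x y ⟨G, H, rfl, rfl, h⟩
    exact ⟨phi4Fn G, phi4Fn H, hφ G, hφ H, phi4_emb h⟩
  refine ⟨φ, hφ, hinv.bijective, fun x y => ⟨hmono x y, fun h => ?_⟩⟩
  have h2 := hmono _ _ h
  rwa [hinv x, hinv y] at h2
end

section
/- The map φ₅ is an order automorphism of (D, ⊑). Here φ₅ sends a digraph G to the digraph on the same vertex set obtained as follows: for every pair of distinct vertices u, v such that both u and v carry a loop and exactly one of the edges (u,v), (v,u) is present, reverse that edge; all loops and all other adjacencies are unchanged. φ₅ is well defined on isomorphism classes and so gives a map D → D. -/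
theorem phi5Fn_invol (G : FinDigraph) : phi5Fn (phi5Fn G) = G := by
  obtain ⟨n, hp, a⟩ := G
  simp only [phi5Fn]
  refine congrArg (FinDigraph.mk n hp) ?_
  funext u v
  by_cases huv : u = v
  · subst huv
    simp
  · have hvu : v ≠ u := fun h => huv h.symm
    rcases Bool.eq_false_or_eq_true (a u u) with h1 | h1 <;>
      rcases Bool.eq_false_or_eq_true (a v v) with h2 | h2 <;>
      rcases Bool.eq_false_or_eq_true (a u v) with h3 | h3 <;>
      rcases Bool.eq_false_or_eq_true (a v u) with h4 | h4 <;>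
      simp [huv, hvu, h1, h2, h3, h4]

theorem phi5Fn_adj_map {G H : FinDigraph} (f : Fin G.n → Fin H.n) (hf : Function.Injective f)
    (h : ∀ u v, H.adj (f u) (f v) = G.adj u v) (u v : Fin G.n) :
    (phi5Fn H).adj (f u) (f v) = (phi5Fn G).adj u v := by
  simp only [phi5Fn, h, ne_eq, hf.eq_iff]

theorem phi5Fn_iso {G H : FinDigraph} (h : FinDigraph.Iso G H) :
    FinDigraph.Iso (phi5Fn G) (phi5Fn H) := by
  obtain ⟨e, he⟩ := h
  exact ⟨e, phi5Fn_adj_map e e.injective he⟩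

theorem phi5Fn_emb {G H : FinDigraph} (h : FinDigraph.Emb G H) :
    FinDigraph.Emb (phi5Fn G) (phi5Fn H) := by
  obtain ⟨e, he⟩ := h
  exact ⟨e, phi5Fn_adj_map e e.injective he⟩

/-- The map induced by φ₅ on isomorphism classes. -/
def phi5D : D → D :=
  Quotient.lift (fun G => toD (phi5Fn G)) (fun _ _ h => Quotient.sound (phi5Fn_iso h))

theorem phi5D_toD (G : FinDigraph) : phi5D (toD G) = toD (phi5Fn G) := rfl

theorem phi5D_invol : Function.Involutive phi5D := by
  intro x
  induction x using Quotient.inductionOn with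
  | h G => exact congrArg toD (phi5Fn_invol G)

theorem phi5D_mono {x y : D} (h : x ≤ y) : phi5D x ≤ phi5D y := by
  obtain ⟨G, H, rfl, rfl, h⟩ := h
  exact ⟨phi5Fn G, phi5Fn H, rfl, rfl, phi5Fn_emb h⟩

/-- φ₅ is well defined on isomorphism classes and is an order
automorphism of `(D, ⊑)`. -/
theorem phi5_isOrderAuto :
    ∃ φ : D → D, (∀ G : FinDigraph, φ (toD G) = toD (phi5Fn G)) ∧ IsOrderAuto φ := by
  refine ⟨phi5D, phi5D_toD, phi5D_invol.bijective, fun x y => ⟨phi5D_mono, fun h => ?_⟩⟩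
  have := phi5D_mono h
  rwa [phi5D_invol x, phi5D_invol y] at this
end

section
/- For every permutation π of Bool × Bool, the map φ_π is an order automorphism of (D, ⊑). Here, for a digraph G and an ordered pair (u,v) of distinct vertices where u carries a loop and v does not, the type of the pair is (Adj(u,v), Adj(v,u)) ∈ Bool × Bool; φ_π sends G to the digraph on the same vertex set in which the type of every such pair is replaced by π applied to its type, while all loops and all adjacencies between pairs of vertices not of this form (both looped or both loopless) are unchanged. φ_π is well defined on isomorphism classes and so gives a map D → D. -/
theorem phiPiFn_left_inv (π : Equiv.Perm (Bool × Bool)) (G : FinDigraph) :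
    phiPiFn π.symm (phiPiFn π G) = G := by
  obtain ⟨n, pos, adj⟩ := G
  unfold phiPiFn
  congr 1
  funext u v
  by_cases h : u = v
  · simp [h]
  · have h' : v ≠ u := fun e => h e.symm
    cases hu : adj u u <;> cases hv : adj v v <;> simp [h, h', hu, hv]

theorem phiPiFn_adj_map (π : Equiv.Perm (Bool × Bool)) {G H : FinDigraph}
    (f : Fin G.n → Fin H.n) (hinj : Function.Injective f)
    (hf : ∀ u v, H.adj (f u) (f v) = G.adj u v) (u v : Fin G.n) :
    (phiPiFn π H).adj (f u) (f v) = (phiPiFn π G).adj u v := by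
  have hi : f u = f v ↔ u = v := hinj.eq_iff
  unfold phiPiFn
  simp only [hi, hf]

theorem phiPiFn_emb (π : Equiv.Perm (Bool × Bool)) {G H : FinDigraph}
    (h : FinDigraph.Emb G H) : FinDigraph.Emb (phiPiFn π G) (phiPiFn π H) := by
  obtain ⟨f, hf⟩ := h
  exact ⟨f, phiPiFn_adj_map π f f.injective hf⟩

theorem phiPiFn_iso (π : Equiv.Perm (Bool × Bool)) {G H : FinDigraph}
    (h : FinDigraph.Iso G H) : FinDigraph.Iso (phiPiFn π G) (phiPiFn π H) := by
  obtain ⟨f, hf⟩ := h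
  exact ⟨f, phiPiFn_adj_map π f f.injective hf⟩

/-- The induced map on isomorphism classes. -/
def phiPiMap (π : Equiv.Perm (Bool × Bool)) : D → D :=
  Quotient.lift (fun G => toD (phiPiFn π G)) (fun _ _ h => Quotient.sound (phiPiFn_iso π h))

theorem phiPiMap_toD (π : Equiv.Perm (Bool × Bool)) (G : FinDigraph) :
    phiPiMap π (toD G) = toD (phiPiFn π G) := rfl

theorem phiPiMap_left_inv (π : Equiv.Perm (Bool × Bool)) (x : D) :
    phiPiMap π.symm (phiPiMap π x) = x := by
  obtain ⟨G, rfl⟩ : ∃ G, toD G = x := Quotient.exists_rep x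
  rw [phiPiMap_toD, phiPiMap_toD, phiPiFn_left_inv]

theorem phiPiMap_mono (π : Equiv.Perm (Bool × Bool)) {x y : D} (h : x ≤ y) :
    phiPiMap π x ≤ phiPiMap π y := by
  obtain ⟨G, H, rfl, rfl, h⟩ := h
  exact ⟨_, _, rfl, rfl, phiPiFn_emb π h⟩

/-- for every permutation `π` of `Bool × Bool`, the map φ_π is well
defined on isomorphism classes and is an order automorphism of `(D, ⊑)`. -/
theorem phiPi_isOrderAuto (π : Equiv.Perm (Bool × Bool)) :
    ∃ φ : D → D, (∀ G : FinDigraph, φ (toD G) = toD (phiPiFn π G)) ∧ IsOrderAuto φ := by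
  refine ⟨phiPiMap π, fun _ => rfl, ⟨?_, ?_⟩, fun x y => ⟨phiPiMap_mono π, fun h => ?_⟩⟩
  · exact Function.LeftInverse.injective (phiPiMap_left_inv π)
  · exact fun y => ⟨phiPiMap π.symm y, phiPiMap_left_inv π.symm y⟩
  · have := phiPiMap_mono π.symm h
    rwa [phiPiMap_left_inv, phiPiMap_left_inv] at this
end

section
/- Let σ be the permutation of Bool × Bool given by σ(a,b) = (b,a). Then for every permutation π of Bool × Bool, as maps D → D one has φ₁ ∘ φ_π ∘ φ₁ = φ_{σ∘π∘σ}. Here φ₁ complements the loop status of every vertex; for a pair (u,v) of distinct vertices where u carries a loop and v does not, the type of the pair is (Adj(u,v), Adj(v,u)) ∈ Bool × Bool, and φ_π replaces the type of every such pair by π applied to its type, leaving all loops and all other adjacencies unchanged; each map is well defined on isomorphism classes. -/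
/-- as maps `D → D`, `φ₁ ∘ φ_π ∘ φ₁ = φ_{σ∘π∘σ}` where `σ(a,b) = (b,a)`. -/
theorem phi1_phiPi_phi1_eq (π : Equiv.Perm (Bool × Bool)) (f1 fP fP' : D → D)
    (h1 : ∀ G : FinDigraph, f1 (toD G) = toD (phi1Fn G))
    (hP : ∀ G : FinDigraph, fP (toD G) = toD (phiPiFn π G))
    (hP' : ∀ G : FinDigraph, fP' (toD G) = toD (phiPiFn (sigmaSwap * π * sigmaSwap) G)) :
    f1 ∘ fP ∘ f1 = fP' := by
  funext x
  induction x using Quotient.inductionOn with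
  | h G =>
    change f1 (fP (f1 (toD G))) = fP' (toD G)
    rw [h1, hP, h1, hP']
    obtain ⟨n, pos, adj⟩ := G
    refine Quotient.sound ⟨Equiv.refl (Fin n), ?_⟩
    intro (u : Fin n) (v : Fin n)
    change (phiPiFn (sigmaSwap * π * sigmaSwap) ⟨n, pos, adj⟩).adj u v =
      (phi1Fn (phiPiFn π (phi1Fn ⟨n, pos, adj⟩))).adj u v
    simp only [phi1Fn, phiPiFn]
    by_cases huv : u = v
    · subst huv; simp
    · have hvu : ¬ v = u := fun h => huv h.symm
      rcases Bool.eq_false_or_eq_true (adj u u) with hu | hu <;>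
        rcases Bool.eq_false_or_eq_true (adj v v) with hv | hv <;>
        simp [huv, hvu, hu, hv, sigmaSwap]
end

section
/- Let C be the subgroup of the group of order automorphisms of (D, ⊑) generated by φ₁, φ₂, φ₃, φ₄, φ₅ together with all φ_π for π a permutation of Bool × Bool. Then C is isomorphic to the semidirect product ((ZMod 2)⁴ × Perm(Bool × Bool)) ⋊_α (ZMod 2), where α(1) sends (p,q,r,s,π) to (q,p,s,r, σ∘π∘σ) with σ the permutation of Bool × Bool given by σ(a,b) = (b,a). -/
set_option linter.unusedSimpArgs false
set_option linter.unusedTactic false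

section Helpers

theorem fd_ext (n : ℕ) (h h' : 0 < n) (a b : Fin n → Fin n → Bool)
    (hab : ∀ u v, a u v = b u v) : (⟨n, h, a⟩ : FinDigraph) = ⟨n, h', b⟩ := by
  have : a = b := by funext u v; exact hab u v
  subst this; rfl

theorem D_ext {f g : D ≃o D} (h : ∀ G, f (toD G) = g (toD G)) : f = g := by
  ext x
  induction x using Quotient.inductionOn with
  | _ G => exact h G

/-- Involution power map. -/
def tHom {K : Type*} [Group K] (g : K) (hg : g * g = 1) : Multiplicative (ZMod 2) →* K where
  toFun p := g ^ (ZMod.val p.toAdd)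
  map_one' := by simp
  map_mul' := by
    intro a b
    have key : ∀ a b : ZMod 2, g ^ (ZMod.val (a + b)) = g ^ (ZMod.val a) * g ^ (ZMod.val b) := by
      intro a b
      fin_cases a <;> fin_cases b
      · show g ^ 0 = g ^ 0 * g ^ 0
        simp
      · show g ^ 1 = g ^ 0 * g ^ 1
        simp
      · show g ^ 1 = g ^ 1 * g ^ 0
        simp
      · show g ^ 0 = g ^ 1 * g ^ 1
        simp [hg]
    exact key a.toAdd b.toAdd

theorem tHom_one {K : Type*} [Group K] (g : K) (hg : g * g = 1) :
    tHom g hg (Multiplicative.ofAdd 1) = g := by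
  show g ^ 1 = g
  simp

theorem zcase (a : ZMod 2) : a = 0 ∨ a = 1 := by
  fin_cases a
  · left; rfl
  · right; rfl

theorem tHom_cases {K : Type*} [Group K] (g : K) (hg : g * g = 1) (p : ZMod 2) :
    (p = 0 ∧ tHom g hg (Multiplicative.ofAdd p) = 1) ∨
    (p = 1 ∧ tHom g hg (Multiplicative.ofAdd p) = g) := by
  rcases zcase p with h | h
  · left; subst h; exact ⟨rfl, map_one _⟩
  · right; subst h; exact ⟨rfl, tHom_one g hg⟩

theorem tHom_commute {K : Type*} [Group K] (g : K) (hg : g * g = 1) (k : K) (h : Commute g k)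
    (p) : Commute (tHom g hg p) k := h.pow_left _

theorem tHom_conj {K : Type*} [Group K] (g k c : K) (hg : g * g = 1) (hk : k * k = 1)
    (h : c * g * c⁻¹ = k) (p) : c * tHom g hg p * c⁻¹ = tHom k hk p := by
  show c * g ^ _ * c⁻¹ = k ^ _
  rw [← h, conj_pow]

theorem tHom_fix (g : D ≃o D) (hg : g * g = 1) (x : D) (h : g x = x) (p) :
    tHom g hg p x = x := by
  rcases tHom_cases g hg p.toAdd with h' | h'
  · have := h'.2
    rw [ofAdd_toAdd] at this
    rw [this]; rfl
  · have := h'.2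
    rw [ofAdd_toAdd] at this
    rw [this]; exact h

/-- adjacency version -/
def Aphi1Fn {n : ℕ} (a : Fin n → Fin n → Bool) : Fin n → Fin n → Bool :=
  fun u v => if u = v then !(a u v) else a u v

theorem Ephi1Fn (n : ℕ) (h : 0 < n) (a : Fin n → Fin n → Bool) :
    phi1Fn ⟨n, h, a⟩ = ⟨n, h, Aphi1Fn a⟩ := rfl

/-- adjacency version -/
def Aphi2Fn {n : ℕ} (a : Fin n → Fin n → Bool) : Fin n → Fin n → Bool :=
  fun u v =>
    if u ≠ v ∧ a u u = false ∧ a v v = false ∧ a u v = a v u then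
      !(a u v)
    else a u v

theorem Ephi2Fn (n : ℕ) (h : 0 < n) (a : Fin n → Fin n → Bool) :
    phi2Fn ⟨n, h, a⟩ = ⟨n, h, Aphi2Fn a⟩ := rfl

/-- adjacency version -/
def Aphi3Fn {n : ℕ} (a : Fin n → Fin n → Bool) : Fin n → Fin n → Bool :=
  fun u v =>
    if u ≠ v ∧ a u u = true ∧ a v v = true ∧ a u v = a v u then
      !(a u v)
    else a u v

theorem Ephi3Fn (n : ℕ) (h : 0 < n) (a : Fin n → Fin n → Bool) :
    phi3Fn ⟨n, h, a⟩ = ⟨n, h, Aphi3Fn a⟩ := rfl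

/-- adjacency version -/
def Aphi4Fn {n : ℕ} (a : Fin n → Fin n → Bool) : Fin n → Fin n → Bool :=
  fun u v =>
    if u ≠ v ∧ a u u = false ∧ a v v = false ∧ a u v ≠ a v u then
      a v u
    else a u v

theorem Ephi4Fn (n : ℕ) (h : 0 < n) (a : Fin n → Fin n → Bool) :
    phi4Fn ⟨n, h, a⟩ = ⟨n, h, Aphi4Fn a⟩ := rfl

/-- adjacency version -/
def Aphi5Fn {n : ℕ} (a : Fin n → Fin n → Bool) : Fin n → Fin n → Bool :=
  fun u v =>
    if u ≠ v ∧ a u u = true ∧ a v v = true ∧ a u v ≠ a v u then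
      a v u
    else a u v

theorem Ephi5Fn (n : ℕ) (h : 0 < n) (a : Fin n → Fin n → Bool) :
    phi5Fn ⟨n, h, a⟩ = ⟨n, h, Aphi5Fn a⟩ := rfl

/-- adjacency version -/
def AphiPiFn (π : Equiv.Perm (Bool × Bool)) {n : ℕ} (a : Fin n → Fin n → Bool) : Fin n → Fin n → Bool :=
  fun u v =>
    if u = v then a u v
    else if a u u = true ∧ a v v = false then (π (a u v, a v u)).1
    else if a u u = false ∧ a v v = true then (π (a v u, a u v)).2
    else a u v

theorem EphiPiFn (π : Equiv.Perm (Bool × Bool)) (n : ℕ) (h : 0 < n) (a : Fin n → Fin n → Bool) :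
    phiPiFn π ⟨n, h, a⟩ = ⟨n, h, AphiPiFn π a⟩ := rfl

theorem r11 (G) : phi1Fn (phi1Fn G) = G := by
  obtain ⟨n, h, a⟩ := G
  simp only [Ephi1Fn, Ephi2Fn, Ephi3Fn, Ephi4Fn, Ephi5Fn, EphiPiFn]
  apply fd_ext
  intro u v
  by_cases e : u = v <;> simp [Aphi1Fn, e]

theorem r22 (G) : phi2Fn (phi2Fn G) = G := by
  obtain ⟨n, h, a⟩ := G
  simp only [Ephi1Fn, Ephi2Fn, Ephi3Fn, Ephi4Fn, Ephi5Fn, EphiPiFn]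
  apply fd_ext
  intro u v
  by_cases e : u = v
  · subst e; simp [Aphi2Fn]
  · have e' : ¬ v = u := fun h => e h.symm
    cases h1 : a u u <;> cases h2 : a v v <;> cases h3 : a u v <;> cases h4 : a v u <;>
      simp [Aphi2Fn, e, e', h1, h2, h3, h4]

theorem r33 (G) : phi3Fn (phi3Fn G) = G := by
  obtain ⟨n, h, a⟩ := G
  simp only [Ephi1Fn, Ephi2Fn, Ephi3Fn, Ephi4Fn, Ephi5Fn, EphiPiFn]
  apply fd_ext
  intro u v
  by_cases e : u = v
  · subst e; simp [Aphi3Fn]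
  · have e' : ¬ v = u := fun h => e h.symm
    cases h1 : a u u <;> cases h2 : a v v <;> cases h3 : a u v <;> cases h4 : a v u <;>
      simp [Aphi3Fn, e, e', h1, h2, h3, h4]

theorem r44 (G) : phi4Fn (phi4Fn G) = G := by
  obtain ⟨n, h, a⟩ := G
  simp only [Ephi1Fn, Ephi2Fn, Ephi3Fn, Ephi4Fn, Ephi5Fn, EphiPiFn]
  apply fd_ext
  intro u v
  by_cases e : u = v
  · subst e; simp [Aphi4Fn]
  · have e' : ¬ v = u := fun h => e h.symm
    cases h1 : a u u <;> cases h2 : a v v <;> cases h3 : a u v <;> cases h4 : a v u <;>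
      simp [Aphi4Fn, e, e', h1, h2, h3, h4]

theorem r55 (G) : phi5Fn (phi5Fn G) = G := by
  obtain ⟨n, h, a⟩ := G
  simp only [Ephi1Fn, Ephi2Fn, Ephi3Fn, Ephi4Fn, Ephi5Fn, EphiPiFn]
  apply fd_ext
  intro u v
  by_cases e : u = v
  · subst e; simp [Aphi5Fn]
  · have e' : ¬ v = u := fun h => e h.symm
    cases h1 : a u u <;> cases h2 : a v v <;> cases h3 : a u v <;> cases h4 : a v u <;>
      simp [Aphi5Fn, e, e', h1, h2, h3, h4]

theorem r23 (G) : phi2Fn (phi3Fn G) = phi3Fn (phi2Fn G) := by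
  obtain ⟨n, h, a⟩ := G
  simp only [Ephi1Fn, Ephi2Fn, Ephi3Fn, Ephi4Fn, Ephi5Fn, EphiPiFn]
  apply fd_ext
  intro u v
  by_cases e : u = v
  · subst e; simp [Aphi2Fn, Aphi3Fn]
  · have e' : ¬ v = u := fun h => e h.symm
    cases h1 : a u u <;> cases h2 : a v v <;> cases h3 : a u v <;> cases h4 : a v u <;>
      simp [Aphi2Fn, Aphi3Fn, e, e', h1, h2, h3, h4]

theorem r24 (G) : phi2Fn (phi4Fn G) = phi4Fn (phi2Fn G) := by
  obtain ⟨n, h, a⟩ := G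
  simp only [Ephi1Fn, Ephi2Fn, Ephi3Fn, Ephi4Fn, Ephi5Fn, EphiPiFn]
  apply fd_ext
  intro u v
  by_cases e : u = v
  · subst e; simp [Aphi2Fn, Aphi4Fn]
  · have e' : ¬ v = u := fun h => e h.symm
    cases h1 : a u u <;> cases h2 : a v v <;> cases h3 : a u v <;> cases h4 : a v u <;>
      simp [Aphi2Fn, Aphi4Fn, e, e', h1, h2, h3, h4]

theorem r25 (G) : phi2Fn (phi5Fn G) = phi5Fn (phi2Fn G) := by
  obtain ⟨n, h, a⟩ := G
  simp only [Ephi1Fn, Ephi2Fn, Ephi3Fn, Ephi4Fn, Ephi5Fn, EphiPiFn]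
  apply fd_ext
  intro u v
  by_cases e : u = v
  · subst e; simp [Aphi2Fn, Aphi5Fn]
  · have e' : ¬ v = u := fun h => e h.symm
    cases h1 : a u u <;> cases h2 : a v v <;> cases h3 : a u v <;> cases h4 : a v u <;>
      simp [Aphi2Fn, Aphi5Fn, e, e', h1, h2, h3, h4]

theorem r34 (G) : phi3Fn (phi4Fn G) = phi4Fn (phi3Fn G) := by
  obtain ⟨n, h, a⟩ := G
  simp only [Ephi1Fn, Ephi2Fn, Ephi3Fn, Ephi4Fn, Ephi5Fn, EphiPiFn]
  apply fd_ext
  intro u v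
  by_cases e : u = v
  · subst e; simp [Aphi3Fn, Aphi4Fn]
  · have e' : ¬ v = u := fun h => e h.symm
    cases h1 : a u u <;> cases h2 : a v v <;> cases h3 : a u v <;> cases h4 : a v u <;>
      simp [Aphi3Fn, Aphi4Fn, e, e', h1, h2, h3, h4]

theorem r35 (G) : phi3Fn (phi5Fn G) = phi5Fn (phi3Fn G) := by
  obtain ⟨n, h, a⟩ := G
  simp only [Ephi1Fn, Ephi2Fn, Ephi3Fn, Ephi4Fn, Ephi5Fn, EphiPiFn]
  apply fd_ext
  intro u v
  by_cases e : u = v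
  · subst e; simp [Aphi3Fn, Aphi5Fn]
  · have e' : ¬ v = u := fun h => e h.symm
    cases h1 : a u u <;> cases h2 : a v v <;> cases h3 : a u v <;> cases h4 : a v u <;>
      simp [Aphi3Fn, Aphi5Fn, e, e', h1, h2, h3, h4]

theorem r45 (G) : phi4Fn (phi5Fn G) = phi5Fn (phi4Fn G) := by
  obtain ⟨n, h, a⟩ := G
  simp only [Ephi1Fn, Ephi2Fn, Ephi3Fn, Ephi4Fn, Ephi5Fn, EphiPiFn]
  apply fd_ext
  intro u v
  by_cases e : u = v
  · subst e; simp [Aphi4Fn, Aphi5Fn]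
  · have e' : ¬ v = u := fun h => e h.symm
    cases h1 : a u u <;> cases h2 : a v v <;> cases h3 : a u v <;> cases h4 : a v u <;>
      simp [Aphi4Fn, Aphi5Fn, e, e', h1, h2, h3, h4]

theorem rP2 (π : Equiv.Perm (Bool × Bool)) (G) : phi2Fn (phiPiFn π G) = phiPiFn π (phi2Fn G) := by
  obtain ⟨n, h, a⟩ := G
  simp only [Ephi1Fn, Ephi2Fn, Ephi3Fn, Ephi4Fn, Ephi5Fn, EphiPiFn]
  apply fd_ext
  intro u v
  by_cases e : u = v
  · subst e; simp [Aphi2Fn, AphiPiFn]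
  · have e' : ¬ v = u := fun h => e h.symm
    cases h1 : a u u <;> cases h2 : a v v <;> cases h3 : a u v <;> cases h4 : a v u <;>
      simp [Aphi2Fn, AphiPiFn, e, e', h1, h2, h3, h4]

theorem rP3 (π : Equiv.Perm (Bool × Bool)) (G) : phi3Fn (phiPiFn π G) = phiPiFn π (phi3Fn G) := by
  obtain ⟨n, h, a⟩ := G
  simp only [Ephi1Fn, Ephi2Fn, Ephi3Fn, Ephi4Fn, Ephi5Fn, EphiPiFn]
  apply fd_ext
  intro u v
  by_cases e : u = v
  · subst e; simp [Aphi3Fn, AphiPiFn]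
  · have e' : ¬ v = u := fun h => e h.symm
    cases h1 : a u u <;> cases h2 : a v v <;> cases h3 : a u v <;> cases h4 : a v u <;>
      simp [Aphi3Fn, AphiPiFn, e, e', h1, h2, h3, h4]

theorem rP4 (π : Equiv.Perm (Bool × Bool)) (G) : phi4Fn (phiPiFn π G) = phiPiFn π (phi4Fn G) := by
  obtain ⟨n, h, a⟩ := G
  simp only [Ephi1Fn, Ephi2Fn, Ephi3Fn, Ephi4Fn, Ephi5Fn, EphiPiFn]
  apply fd_ext
  intro u v
  by_cases e : u = v
  · subst e; simp [Aphi4Fn, AphiPiFn]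
  · have e' : ¬ v = u := fun h => e h.symm
    cases h1 : a u u <;> cases h2 : a v v <;> cases h3 : a u v <;> cases h4 : a v u <;>
      simp [Aphi4Fn, AphiPiFn, e, e', h1, h2, h3, h4]

theorem rP5 (π : Equiv.Perm (Bool × Bool)) (G) : phi5Fn (phiPiFn π G) = phiPiFn π (phi5Fn G) := by
  obtain ⟨n, h, a⟩ := G
  simp only [Ephi1Fn, Ephi2Fn, Ephi3Fn, Ephi4Fn, Ephi5Fn, EphiPiFn]
  apply fd_ext
  intro u v
  by_cases e : u = v
  · subst e; simp [Aphi5Fn, AphiPiFn]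
  · have e' : ¬ v = u := fun h => e h.symm
    cases h1 : a u u <;> cases h2 : a v v <;> cases h3 : a u v <;> cases h4 : a v u <;>
      simp [Aphi5Fn, AphiPiFn, e, e', h1, h2, h3, h4]

theorem rPP (π τ : Equiv.Perm (Bool × Bool)) (G) : phiPiFn (π * τ) G = phiPiFn π (phiPiFn τ G) := by
  obtain ⟨n, h, a⟩ := G
  simp only [Ephi1Fn, Ephi2Fn, Ephi3Fn, Ephi4Fn, Ephi5Fn, EphiPiFn]
  apply fd_ext
  intro u v
  by_cases e : u = v
  · subst e; simp [AphiPiFn]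
  · have e' : ¬ v = u := fun h => e h.symm
    cases h1 : a u u <;> cases h2 : a v v <;> cases h3 : a u v <;> cases h4 : a v u <;>
      simp [AphiPiFn, e, e', h1, h2, h3, h4]

theorem c12 (G) : phi1Fn (phi2Fn G) = phi3Fn (phi1Fn G) := by
  obtain ⟨n, h, a⟩ := G
  simp only [Ephi1Fn, Ephi2Fn, Ephi3Fn, Ephi4Fn, Ephi5Fn, EphiPiFn]
  apply fd_ext
  intro u v
  by_cases e : u = v
  · subst e; simp [Aphi1Fn, Aphi2Fn, Aphi3Fn]
  · have e' : ¬ v = u := fun h => e h.symm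
    cases h1 : a u u <;> cases h2 : a v v <;> cases h3 : a u v <;> cases h4 : a v u <;>
      simp [Aphi1Fn, Aphi2Fn, Aphi3Fn, e, e', h1, h2, h3, h4]

theorem c14 (G) : phi1Fn (phi4Fn G) = phi5Fn (phi1Fn G) := by
  obtain ⟨n, h, a⟩ := G
  simp only [Ephi1Fn, Ephi2Fn, Ephi3Fn, Ephi4Fn, Ephi5Fn, EphiPiFn]
  apply fd_ext
  intro u v
  by_cases e : u = v
  · subst e; simp [Aphi1Fn, Aphi4Fn, Aphi5Fn]
  · have e' : ¬ v = u := fun h => e h.symm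
    cases h1 : a u u <;> cases h2 : a v v <;> cases h3 : a u v <;> cases h4 : a v u <;>
      simp [Aphi1Fn, Aphi4Fn, Aphi5Fn, e, e', h1, h2, h3, h4]

theorem c1P (π : Equiv.Perm (Bool × Bool)) (G) : phi1Fn (phiPiFn π G) = phiPiFn (sigmaSwap * π * sigmaSwap) (phi1Fn G) := by
  obtain ⟨n, h, a⟩ := G
  simp only [Ephi1Fn, Ephi2Fn, Ephi3Fn, Ephi4Fn, Ephi5Fn, EphiPiFn]
  apply fd_ext
  intro u v
  by_cases e : u = v
  · subst e; simp [Aphi1Fn, AphiPiFn, sigmaSwap]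
  · have e' : ¬ v = u := fun h => e h.symm
    cases h1 : a u u <;> cases h2 : a v v <;> cases h3 : a u v <;> cases h4 : a v u <;>
      simp [Aphi1Fn, AphiPiFn, sigmaSwap, e, e', h1, h2, h3, h4]

end Helpers

section Tests

/-- test graph: one vertex with given loop status -/
def T1 (b : Bool) : FinDigraph := ⟨1, by norm_num, fun _ _ => b⟩

/-- two vertices of equal loop status, with symmetric edges -/
def T2 (b c : Bool) : FinDigraph := ⟨2, by norm_num, fun u v => if u = v then b else c⟩

/-- looped vertex 0 and loopless vertex 1 with type x -/
def TM (x : Bool × Bool) : FinDigraph := ⟨2, by norm_num, fun u v =>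
  if u = v then decide (u = 0) else if u = 0 then x.1 else x.2⟩

/-- out-star or in-star on three vertices -/
def T3 (b c : Bool) : FinDigraph := ⟨3, by norm_num, fun u v => if u = v then b else
  if u = 0 then c else if v = 0 then !c else false⟩

theorem toD_inj {G H : FinDigraph} (h : toD G = toD H) : FinDigraph.Iso G H :=
  Quotient.exact h

theorem T1_ne {b c} (h : toD (T1 b) = toD (T1 c)) : b = c := by
  obtain ⟨e, he⟩ := toD_inj h
  exact (he ⟨0, by simp [T1]⟩ ⟨0, by simp [T1]⟩).symm

theorem T2_ne {b c d} (h : toD (T2 b c) = toD (T2 b d)) : c = d := by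
  have h' : ∃ e : Fin 2 ≃ Fin 2, ∀ u v : Fin 2,
    (if e u = e v then b else d) = (if u = v then b else c) := toD_inj h
  obtain ⟨e, he⟩ := h'
  have := he 0 1
  simpa using this.symm

theorem TM_ne {x y} (h : toD (TM x) = toD (TM y)) : x = y := by
  have h' : ∃ e : Fin 2 ≃ Fin 2, ∀ u v : Fin 2,
    (if e u = e v then decide (e u = 0) else if e u = 0 then y.1 else y.2) =
    (if u = v then decide (u = 0) else if u = 0 then x.1 else x.2) := toD_inj h
  obtain ⟨e, he⟩ := h'
  have h00 := he 0 0
  have h11 := he 1 1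
  have h01 := he 0 1
  have h10 := he 1 0
  simp at h00 h11
  have h1 : e 1 = 1 := by
    have : ∀ z : Fin 2, z ≠ 0 → z = 1 := by decide
    exact this _ h11
  rw [h00, h1] at h01 h10
  simp at h01 h10
  exact Prod.ext h01.symm h10.symm

theorem T3_ne {b} (h : toD (T3 b true) = toD (T3 b false)) : False := by
  obtain ⟨e, he⟩ := toD_inj h
  change Fin 3 ≃ Fin 3 at e
  change ∀ u v : Fin 3, _ at he
  have h01 := he 0 1
  have h02 := he 0 2
  have n1 : e 0 ≠ e 1 := e.injective.ne (by decide)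
  have n2 : e 0 ≠ e 2 := e.injective.ne (by decide)
  have n3 : e 1 ≠ e 2 := e.injective.ne (by decide)
  simp [T3] at h01 h02
  generalize e 0 = x at *
  generalize e 1 = y at *
  generalize e 2 = z at *
  rw [if_neg n1] at h01
  rw [if_neg n2] at h02
  revert x y z
  decide

end Tests

/-- the subgroup `C` of order automorphisms of `(D, ⊑)` generated by
`φ₁,…,φ₅` and all `φ_π` is isomorphic to `((ZMod 2)⁴ × Perm (Bool × Bool)) ⋊_α (ZMod 2)`,
where `α 1 : (p,q,r,s,π) ↦ (q,p,s,r, σ∘π∘σ)` with `σ(a,b) = (b,a)`. -/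
theorem conjGroup_iso_semidirectProduct
    (g1 g2 g3 g4 g5 : D ≃o D) (gP : Equiv.Perm (Bool × Bool) → D ≃o D)
    (h1 : ∀ G : FinDigraph, g1 (toD G) = toD (phi1Fn G))
    (h2 : ∀ G : FinDigraph, g2 (toD G) = toD (phi2Fn G))
    (h3 : ∀ G : FinDigraph, g3 (toD G) = toD (phi3Fn G))
    (h4 : ∀ G : FinDigraph, g4 (toD G) = toD (phi4Fn G))
    (h5 : ∀ G : FinDigraph, g5 (toD G) = toD (phi5Fn G))
    (hP : ∀ (π : Equiv.Perm (Bool × Bool)) (G : FinDigraph),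
      gP π (toD G) = toD (phiPiFn π G))
    (α : Multiplicative (ZMod 2) →*
      MulAut (Multiplicative (ZMod 2 × ZMod 2 × ZMod 2 × ZMod 2) × Equiv.Perm (Bool × Bool)))
    (hα : ∀ (p q r s : ZMod 2) (π : Equiv.Perm (Bool × Bool)),
      α (Multiplicative.ofAdd (1 : ZMod 2)) (Multiplicative.ofAdd (p, q, r, s), π)
        = (Multiplicative.ofAdd (q, p, s, r), sigmaSwap * π * sigmaSwap)) :
    Nonempty
      (↥(Subgroup.closure ({g1, g2, g3, g4, g5} ∪ Set.range gP : Set (D ≃o D))) ≃*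
        (Multiplicative (ZMod 2 × ZMod 2 × ZMod 2 × ZMod 2) × Equiv.Perm (Bool × Bool))
          ⋊[α] Multiplicative (ZMod 2)) := by
  have i1 : g1 * g1 = 1 := D_ext fun G => by simp [h1, r11]
  have i2 : g2 * g2 = 1 := D_ext fun G => by simp [h2, r22]
  have i3 : g3 * g3 = 1 := D_ext fun G => by simp [h3, r33]
  have i4 : g4 * g4 = 1 := D_ext fun G => by simp [h4, r44]
  have i5 : g5 * g5 = 1 := D_ext fun G => by simp [h5, r55]
  have k23 : Commute g2 g3 := D_ext fun G => by simp [h2, h3, r23]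
  have k24 : Commute g2 g4 := D_ext fun G => by simp [h2, h4, r24]
  have k25 : Commute g2 g5 := D_ext fun G => by simp [h2, h5, r25]
  have k34 : Commute g3 g4 := D_ext fun G => by simp [h3, h4, r34]
  have k35 : Commute g3 g5 := D_ext fun G => by simp [h3, h5, r35]
  have k45 : Commute g4 g5 := D_ext fun G => by simp [h4, h5, r45]
  have k2P : ∀ π, Commute g2 (gP π) := fun π => D_ext fun G => by simp [h2, hP, rP2]
  have k3P : ∀ π, Commute g3 (gP π) := fun π => D_ext fun G => by simp [h3, hP, rP3]
  have k4P : ∀ π, Commute g4 (gP π) := fun π => D_ext fun G => by simp [h4, hP, rP4]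
  have k5P : ∀ π, Commute g5 (gP π) := fun π => D_ext fun G => by simp [h5, hP, rP5]
  have hPmul : ∀ π τ, gP (π * τ) = gP π * gP τ := fun π τ => D_ext fun G => by
    simp [hP, rPP]
  have hP1 : gP 1 = 1 := by
    have := hPmul 1 1
    rw [one_mul] at this
    exact (left_eq_mul.mp this)
  have j1 : g1⁻¹ = g1 := inv_eq_of_mul_eq_one_left i1
  have c2 : g1 * g2 * g1⁻¹ = g3 := by
    rw [mul_inv_eq_iff_eq_mul]; exact D_ext fun G => by simp [h1, h2, h3, c12]
  have c4 : g1 * g4 * g1⁻¹ = g5 := by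
    rw [mul_inv_eq_iff_eq_mul]; exact D_ext fun G => by simp [h1, h4, h5, c14]
  have c3 : g1 * g3 * g1⁻¹ = g2 := by
    rw [← c2, j1]
    calc g1 * (g1 * g2 * g1) * g1 = (g1 * g1) * g2 * (g1 * g1) := by simp only [mul_assoc]
      _ = g2 := by simp [i1]
  have c5 : g1 * g5 * g1⁻¹ = g4 := by
    rw [← c4, j1]
    calc g1 * (g1 * g4 * g1) * g1 = (g1 * g1) * g4 * (g1 * g1) := by simp only [mul_assoc]
      _ = g4 := by simp [i1]
  have cP : ∀ π, g1 * gP π * g1⁻¹ = gP (sigmaSwap * π * sigmaSwap) := fun π => by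
    rw [mul_inv_eq_iff_eq_mul]
    exact D_ext fun G => by
      simp only [RelIso.mul_apply, h1, hP, c1P]
  let F : ZMod 2 → ZMod 2 → ZMod 2 → ZMod 2 → Equiv.Perm (Bool × Bool) → (D ≃o D) :=
    fun p q r s π => tHom g2 i2 (.ofAdd p) * (tHom g3 i3 (.ofAdd q) * (tHom g4 i4 (.ofAdd r) *
      (tHom g5 i5 (.ofAdd s) * gP π)))
  have Fdef : ∀ p q r s π, F p q r s π = tHom g2 i2 (.ofAdd p) * (tHom g3 i3 (.ofAdd q) *
      (tHom g4 i4 (.ofAdd r) * (tHom g5 i5 (.ofAdd s) * gP π))) := fun _ _ _ _ _ => rfl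
  have tc : ∀ (g k : D ≃o D) (hg : g * g = 1) (hk : k * k = 1) (h : Commute g k) p q,
      Commute (tHom g hg p) (tHom k hk q) := fun g k hg hk h p q =>
    (h.pow_left _).pow_right _
  have Fmul : ∀ p q r s π p' q' r' s' π',
      F (p + p') (q + q') (r + r') (s + s') (π * π') = F p q r s π * F p' q' r' s' π' := by
    intro p q r s π p' q' r' s' π'
    simp only [Fdef, ofAdd_add, map_mul, hPmul]
    symm
    rw [Commute.mul_mul_mul_comm (a := tHom g2 i2 (.ofAdd p)), Commute.mul_mul_mul_comm (a := tHom g3 i3 (.ofAdd q)),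
      Commute.mul_mul_mul_comm (a := tHom g4 i4 (.ofAdd r)), Commute.mul_mul_mul_comm (a := tHom g5 i5 (.ofAdd s))]
    · exact (tHom_commute _ _ _ (k5P π) _).symm
    · exact Commute.mul_left (tc _ _ _ _ k45.symm _ _) (tHom_commute _ _ _ (k4P π) _).symm
    · exact Commute.mul_left (tc _ _ _ _ k34.symm _ _) (Commute.mul_left (tc _ _ _ _ k35.symm _ _)
        (tHom_commute _ _ _ (k3P π) _).symm)
    · exact Commute.mul_left (tc _ _ _ _ k23.symm _ _) (Commute.mul_left (tc _ _ _ _ k24.symm _ _)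
        (Commute.mul_left (tc _ _ _ _ k25.symm _ _) (tHom_commute _ _ _ (k2P π) _).symm))
  have F1 : F 0 0 0 0 1 = 1 := by simp [Fdef, hP1]
  have Fconj : ∀ p q r s π, F q p s r (sigmaSwap * π * sigmaSwap) = g1 * F p q r s π * g1⁻¹ := by
    intro p q r s π
    have e : g1 * F p q r s π * g1⁻¹ = (g1 * tHom g2 i2 (.ofAdd p) * g1⁻¹) *
      ((g1 * tHom g3 i3 (.ofAdd q) * g1⁻¹) * ((g1 * tHom g4 i4 (.ofAdd r) * g1⁻¹) *
      ((g1 * tHom g5 i5 (.ofAdd s) * g1⁻¹) * (g1 * gP π * g1⁻¹)))) := by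
      rw [Fdef]; group
    rw [e, tHom_conj _ _ _ i2 i3 c2, tHom_conj _ _ _ i3 i2 c3, tHom_conj _ _ _ i4 i5 c4,
      tHom_conj _ _ _ i5 i4 c5, cP, Fdef]
    rw [← mul_assoc, ← mul_assoc (tHom g3 i3 (.ofAdd p)), (tc _ _ _ _ k23 _ _).eq]
    congr 1
    rw [← mul_assoc, ← mul_assoc (tHom g5 i5 (.ofAdd r)), (tc _ _ _ _ k45 _ _).eq]
  let f₁ : Multiplicative (ZMod 2 × ZMod 2 × ZMod 2 × ZMod 2) × Equiv.Perm (Bool × Bool) →*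
      (D ≃o D) :=
    { toFun := fun x => F x.1.toAdd.1 x.1.toAdd.2.1 x.1.toAdd.2.2.1 x.1.toAdd.2.2.2 x.2
      map_one' := F1
      map_mul' := fun x y => Fmul _ _ _ _ _ _ _ _ _ _ }
  have f₁def : ∀ p q r s π, f₁ (.ofAdd (p, q, r, s), π) = F p q r s π := fun _ _ _ _ _ => rfl
  let f₂ := tHom g1 i1
  have hcomp : ∀ g, f₁.comp (α g).toMonoidHom = (MulAut.conj (f₂ g)).toMonoidHom.comp f₁ := by
    intro g
    rcases zcase g.toAdd with h | h
    · have : g = 1 := h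
      subst this
      ext x <;> simp
    · have : g = .ofAdd 1 := h
      subst this
      apply MonoidHom.ext
      rintro ⟨x, π⟩
      have hx := hα x.toAdd.1 x.toAdd.2.1 x.toAdd.2.2.1 x.toAdd.2.2.2 π
      have hf : f₂ (.ofAdd 1) = g1 := tHom_one _ _
      have hc := Fconj x.toAdd.1 x.toAdd.2.1 x.toAdd.2.2.1 x.toAdd.2.2.2 π
      rw [← f₁def, ← hx] at hc
      simp only [MonoidHom.comp_apply, hf]
      exact hc
  let Φ := SemidirectProduct.lift f₁ f₂ hcomp
  have Φdef : ∀ x, Φ x = f₁ x.left * f₂ x.right := fun x => rfl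
  have hinj : Function.Injective Φ := by
    rw [injective_iff_map_eq_one]
    rintro ⟨⟨x, π⟩, ε⟩ hx
    obtain ⟨p, q, r, s, rfl⟩ : ∃ p q r s, x = .ofAdd (p, q, r, s) := ⟨_, _, _, _, rfl⟩
    rw [Φdef] at hx
    simp only [f₁def] at hx
    have fixall : ∀ G, phi2Fn G = G → phi3Fn G = G → phi4Fn G = G → phi5Fn G = G →
        phiPiFn π G = G → F p q r s π (toD G) = toD G := by
      intro G a2 a3 a4 a5 aP
      simp only [Fdef, RelIso.mul_apply]
      rw [hP, aP, tHom_fix g5 i5 _ (by rw [h5, a5]), tHom_fix g4 i4 _ (by rw [h4, a4]),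
        tHom_fix g3 i3 _ (by rw [h3, a3]), tHom_fix g2 i2 _ (by rw [h2, a2])]
    have one : ∀ b, F p q r s π (toD (T1 b)) = toD (T1 b) := by
      intro b
      apply fixall <;> simp only [T1, Ephi1Fn, Ephi2Fn, Ephi3Fn, Ephi4Fn, Ephi5Fn, EphiPiFn] <;> apply fd_ext <;> intro u v <;>
        simp [Aphi1Fn, Aphi2Fn, Aphi3Fn, Aphi4Fn, Aphi5Fn, AphiPiFn, Subsingleton.elim u v]
    have hε : ε = 1 := by
      rcases zcase ε.toAdd with h | h
      · exact h
      · exfalso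
        have he : ε = .ofAdd 1 := h
        subst he
        have hf : f₂ (.ofAdd 1) = g1 := tHom_one _ _
        have := DFunLike.congr_fun hx (toD (T1 true))
        rw [hf, RelIso.mul_apply, h1] at this
        have e : phi1Fn (T1 true) = T1 false := by
          simp only [T1, Ephi1Fn, Ephi2Fn, Ephi3Fn, Ephi4Fn, Ephi5Fn, EphiPiFn]; apply fd_ext; intro u v; simp [Aphi1Fn, Aphi2Fn, Aphi3Fn, Aphi4Fn, Aphi5Fn, AphiPiFn, Subsingleton.elim u v]
        rw [e, one] at this
        exact absurd (T1_ne this) (by decide)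
    subst hε
    rw [map_one, mul_one] at hx
    have ev : ∀ G, F p q r s π (toD G) = toD G := fun G => by rw [hx]; rfl
    simp only [Fdef, RelIso.mul_apply] at ev
    have hπ : π = 1 := by
      apply Equiv.ext
      intro x
      have := ev (TM x)
      have e : phiPiFn π (TM x) = TM (π x) := by
        simp only [TM, Ephi1Fn, Ephi2Fn, Ephi3Fn, Ephi4Fn, Ephi5Fn, EphiPiFn]; apply fd_ext; intro u v
        fin_cases u <;> fin_cases v <;> simp [Aphi1Fn, Aphi2Fn, Aphi3Fn, Aphi4Fn, Aphi5Fn, AphiPiFn]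
      have a2 : ∀ x, phi2Fn (TM x) = TM x := by
        intro x; simp only [TM, Ephi1Fn, Ephi2Fn, Ephi3Fn, Ephi4Fn, Ephi5Fn, EphiPiFn]; apply fd_ext; intro u v
        fin_cases u <;> fin_cases v <;> simp [Aphi1Fn, Aphi2Fn, Aphi3Fn, Aphi4Fn, Aphi5Fn, AphiPiFn]
      have a3 : ∀ x, phi3Fn (TM x) = TM x := by
        intro x; simp only [TM, Ephi1Fn, Ephi2Fn, Ephi3Fn, Ephi4Fn, Ephi5Fn, EphiPiFn]; apply fd_ext; intro u v
        fin_cases u <;> fin_cases v <;> simp [Aphi1Fn, Aphi2Fn, Aphi3Fn, Aphi4Fn, Aphi5Fn, AphiPiFn]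
      have a4 : ∀ x, phi4Fn (TM x) = TM x := by
        intro x; simp only [TM, Ephi1Fn, Ephi2Fn, Ephi3Fn, Ephi4Fn, Ephi5Fn, EphiPiFn]; apply fd_ext; intro u v
        fin_cases u <;> fin_cases v <;> simp [Aphi1Fn, Aphi2Fn, Aphi3Fn, Aphi4Fn, Aphi5Fn, AphiPiFn]
      have a5 : ∀ x, phi5Fn (TM x) = TM x := by
        intro x; simp only [TM, Ephi1Fn, Ephi2Fn, Ephi3Fn, Ephi4Fn, Ephi5Fn, EphiPiFn]; apply fd_ext; intro u v
        fin_cases u <;> fin_cases v <;> simp [Aphi1Fn, Aphi2Fn, Aphi3Fn, Aphi4Fn, Aphi5Fn, AphiPiFn]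
      rw [hP, e, tHom_fix g5 i5 _ (by rw [h5, a5]), tHom_fix g4 i4 _ (by rw [h4, a4]),
        tHom_fix g3 i3 _ (by rw [h3, a3]), tHom_fix g2 i2 _ (by rw [h2, a2])] at this
      exact TM_ne this
    subst hπ
    simp only [hP1, RelIso.one_apply] at ev
    have hp : p = 0 := by
      rcases tHom_cases g2 i2 p with h | ⟨-, h⟩
      · exact h.1
      · exfalso
        have := ev (T2 false false)
        have e : phi2Fn (T2 false false) = T2 false true := by
          apply fd_ext; change ∀ u v : Fin 2, _; decide
        rw [tHom_fix g5 i5, tHom_fix g4 i4, tHom_fix g3 i3, h, h2, e] at this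
        · exact absurd (T2_ne this) (by decide)
        · rw [h3]; congr 1; apply fd_ext; change ∀ u v : Fin 2, _; decide
        · rw [h4]; congr 1; apply fd_ext; change ∀ u v : Fin 2, _; decide
        · rw [h5]; congr 1; apply fd_ext; change ∀ u v : Fin 2, _; decide
    subst hp
    simp only [ofAdd_zero, map_one, RelIso.one_apply] at ev
    have hq : q = 0 := by
      rcases tHom_cases g3 i3 q with h | ⟨-, h⟩
      · exact h.1
      · exfalso
        have := ev (T2 true false)
        have e : phi3Fn (T2 true false) = T2 true true := by
          apply fd_ext; change ∀ u v : Fin 2, _; decide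
        rw [tHom_fix g5 i5, tHom_fix g4 i4, h, h3, e] at this
        · exact absurd (T2_ne this) (by decide)
        · rw [h4]; congr 1; apply fd_ext; change ∀ u v : Fin 2, _; decide
        · rw [h5]; congr 1; apply fd_ext; change ∀ u v : Fin 2, _; decide
    subst hq
    simp only [ofAdd_zero, map_one, RelIso.one_apply] at ev
    have hr : r = 0 := by
      rcases tHom_cases g4 i4 r with h | ⟨-, h⟩
      · exact h.1
      · exfalso
        have := ev (T3 false false)
        have e : phi4Fn (T3 false false) = T3 false true := by
          apply fd_ext; change ∀ u v : Fin 3, _; decide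
        rw [tHom_fix g5 i5, h, h4, e] at this
        · exact T3_ne this
        · rw [h5]; congr 1; apply fd_ext; change ∀ u v : Fin 3, _; decide
    subst hr
    simp only [ofAdd_zero, map_one, RelIso.one_apply] at ev
    have hs : s = 0 := by
      rcases tHom_cases g5 i5 s with h | ⟨-, h⟩
      · exact h.1
      · exfalso
        have := ev (T3 true false)
        have e : phi5Fn (T3 true false) = T3 true true := by
          apply fd_ext; change ∀ u v : Fin 3, _; decide
        rw [h, h5, e] at this
        exact T3_ne this
    subst hs
    rfl
  have hrange : Φ.range = Subgroup.closure ({g1, g2, g3, g4, g5} ∪ Set.range gP) := by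
    have hinl : ∀ p q r s π, F p q r s π ∈ Φ.range := fun p q r s π =>
      ⟨SemidirectProduct.inl (.ofAdd (p, q, r, s), π), SemidirectProduct.lift_inl ..⟩
    apply le_antisymm
    · rintro _ ⟨⟨⟨x, π⟩, ε⟩, rfl⟩
      have m : ∀ g ∈ ({g1, g2, g3, g4, g5} ∪ Set.range gP : Set (D ≃o D)),
        g ∈ Subgroup.closure ({g1, g2, g3, g4, g5} ∪ Set.range gP) :=
          fun g hg => Subgroup.subset_closure hg
      rw [Φdef]
      refine mul_mem (mul_mem ?_ (mul_mem ?_ (mul_mem ?_ (mul_mem ?_ ?_)))) ?_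
      · exact pow_mem (m _ (by simp)) _
      · exact pow_mem (m _ (by simp)) _
      · exact pow_mem (m _ (by simp)) _
      · exact pow_mem (m _ (by simp)) _
      · exact m _ (by simp)
      · exact pow_mem (m _ (by simp)) _
    · rw [Subgroup.closure_le]
      rintro g (hg | ⟨π, rfl⟩)
      · rcases hg with rfl | rfl | rfl | rfl | rfl
        · exact ⟨SemidirectProduct.inr (.ofAdd 1),
            (SemidirectProduct.lift_inr ..).trans (tHom_one _ _)⟩
        · have := hinl 1 0 0 0 1
          simpa [Fdef, hP1, tHom_one] using this
        · have := hinl 0 1 0 0 1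
          simpa [Fdef, hP1, tHom_one] using this
        · have := hinl 0 0 1 0 1
          simpa [Fdef, hP1, tHom_one] using this
        · have := hinl 0 0 0 1 1
          simpa [Fdef, hP1, tHom_one] using this
      · have := hinl 0 0 0 0 π
        simpa [Fdef] using this
  exact ⟨((MonoidHom.ofInjective hinj).trans (MulEquiv.subgroupCongr hrange)).symm⟩
end

section
/- The subgroup C of the group of order automorphisms of (D, ⊑) generated by φ₁, φ₂, φ₃, φ₄, φ₅ together with all φ_π (π a permutation of Bool × Bool) has exactly 768 elements. -/
set_option linter.unusedSimpArgs false

section helpers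

theorem hp_ext (n : ℕ) (p : 0 < n) (a b : Fin n → Fin n → Bool) (h : ∀ u v, a u v = b u v) :
    (⟨n, p, a⟩ : FinDigraph) = ⟨n, p, b⟩ := by
  have : a = b := by funext u v; exact h u v
  rw [this]

def hpa1 {n : ℕ} (a : Fin n → Fin n → Bool) (u v : Fin n) : Bool := if u = v then !(a u v) else a u v

theorem hpa1_eq (n : ℕ) (p : 0 < n) (a : Fin n → Fin n → Bool) :
    phi1Fn ⟨n, p, a⟩ = ⟨n, p, hpa1 a⟩ := rfl

def hpa2 {n : ℕ} (a : Fin n → Fin n → Bool) (u v : Fin n) : Bool :=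
    if u ≠ v ∧ a u u = false ∧ a v v = false ∧ a u v = a v u then
      !(a u v)
    else a u v

theorem hpa2_eq (n : ℕ) (p : 0 < n) (a : Fin n → Fin n → Bool) :
    phi2Fn ⟨n, p, a⟩ = ⟨n, p, hpa2 a⟩ := rfl

def hpa3 {n : ℕ} (a : Fin n → Fin n → Bool) (u v : Fin n) : Bool :=
    if u ≠ v ∧ a u u = true ∧ a v v = true ∧ a u v = a v u then
      !(a u v)
    else a u v

theorem hpa3_eq (n : ℕ) (p : 0 < n) (a : Fin n → Fin n → Bool) :
    phi3Fn ⟨n, p, a⟩ = ⟨n, p, hpa3 a⟩ := rfl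

def hpa4 {n : ℕ} (a : Fin n → Fin n → Bool) (u v : Fin n) : Bool :=
    if u ≠ v ∧ a u u = false ∧ a v v = false ∧ a u v ≠ a v u then
      a v u
    else a u v

theorem hpa4_eq (n : ℕ) (p : 0 < n) (a : Fin n → Fin n → Bool) :
    phi4Fn ⟨n, p, a⟩ = ⟨n, p, hpa4 a⟩ := rfl

def hpa5 {n : ℕ} (a : Fin n → Fin n → Bool) (u v : Fin n) : Bool :=
    if u ≠ v ∧ a u u = true ∧ a v v = true ∧ a u v ≠ a v u then
      a v u
    else a u v

theorem hpa5_eq (n : ℕ) (p : 0 < n) (a : Fin n → Fin n → Bool) :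
    phi5Fn ⟨n, p, a⟩ = ⟨n, p, hpa5 a⟩ := rfl

def hpaPi (π : Equiv.Perm (Bool × Bool)) {n : ℕ} (a : Fin n → Fin n → Bool) (u v : Fin n) : Bool :=
    if u = v then a u v
    else if a u u = true ∧ a v v = false then (π (a u v, a v u)).1
    else if a u u = false ∧ a v v = true then (π (a v u, a u v)).2
    else a u v

theorem hpaPi_eq (π : Equiv.Perm (Bool × Bool)) (n : ℕ) (p : 0 < n) (a : Fin n → Fin n → Bool) :
    phiPiFn π ⟨n, p, a⟩ = ⟨n, p, hpaPi π a⟩ := rfl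

theorem hp_rels (π ρ : Equiv.Perm (Bool × Bool)) (G : FinDigraph) :
    phi1Fn (phi1Fn G) = G ∧
    phi2Fn (phi2Fn G) = G ∧
    phi3Fn (phi3Fn G) = G ∧
    phi4Fn (phi4Fn G) = G ∧
    phi5Fn (phi5Fn G) = G ∧
    phi3Fn (phi2Fn G) = phi2Fn (phi3Fn G) ∧
    phi4Fn (phi2Fn G) = phi2Fn (phi4Fn G) ∧
    phi5Fn (phi2Fn G) = phi2Fn (phi5Fn G) ∧
    phiPiFn π (phi2Fn G) = phi2Fn (phiPiFn π G) ∧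
    phi4Fn (phi3Fn G) = phi3Fn (phi4Fn G) ∧
    phi5Fn (phi3Fn G) = phi3Fn (phi5Fn G) ∧
    phiPiFn π (phi3Fn G) = phi3Fn (phiPiFn π G) ∧
    phi5Fn (phi4Fn G) = phi4Fn (phi5Fn G) ∧
    phiPiFn π (phi4Fn G) = phi4Fn (phiPiFn π G) ∧
    phiPiFn π (phi5Fn G) = phi5Fn (phiPiFn π G) ∧
    phi2Fn (phi1Fn G) = phi1Fn (phi3Fn G) ∧
    phi3Fn (phi1Fn G) = phi1Fn (phi2Fn G) ∧
    phi4Fn (phi1Fn G) = phi1Fn (phi5Fn G) ∧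
    phi5Fn (phi1Fn G) = phi1Fn (phi4Fn G) ∧
    phiPiFn π (phi1Fn G) = phi1Fn (phiPiFn (sigmaSwap * π * sigmaSwap) G) ∧
    phiPiFn π (phiPiFn ρ G) = phiPiFn (π * ρ) G ∧
    phiPiFn 1 G = G := by
  obtain ⟨n, p, a⟩ := G
  simp only [hpa1_eq, hpa2_eq, hpa3_eq, hpa4_eq, hpa5_eq, hpaPi_eq]
  refine ⟨?_, ?_, ?_, ?_, ?_, ?_, ?_, ?_, ?_, ?_, ?_, ?_, ?_, ?_, ?_, ?_, ?_, ?_, ?_, ?_, ?_, ?_⟩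
  all_goals
    apply hp_ext
    intro u v
    by_cases h : u = v
    · subst h
      cases ha : a u u <;> simp [hpa1, hpa2, hpa3, hpa4, hpa5, hpaPi, ha]
    · have h' : ¬ v = u := fun e => h e.symm
      cases h1 : a u u <;> cases h2 : a v v <;> cases h3 : a u v <;> cases h4 : a v u <;>
        simp [hpa1, hpa2, hpa3, hpa4, hpa5, hpaPi, h, h', h1, h2, h3, h4, sigmaSwap]

theorem hp_eq {x y : D ≃o D} (h : ∀ G, x (toD G) = y (toD G)) : x = y :=
  RelIso.ext fun z => Quotient.inductionOn z h



def hpPt : FinDigraph := ⟨1, by decide, fun _ _ => false⟩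
def hpL (b : Bool) : FinDigraph := ⟨2, by decide, fun u v => if u = v then b else false⟩
def hpV (b : Bool) : FinDigraph := ⟨3, by decide, fun u v => if u = v then b else decide (u = 0)⟩
def hpM (p : Bool × Bool) : FinDigraph :=
  ⟨2, by decide, fun u v => if u = v then decide (u = 0) else if u = 0 then p.1 else p.2⟩

theorem hp_ne {n : ℕ} {p : 0 < n} {a b : Fin n → Fin n → Bool}
    (h : ¬ ∃ e : Fin n ≃ Fin n, ∀ u v, b (e u) (e v) = a u v) :
    toD ⟨n, p, a⟩ ≠ toD ⟨n, p, b⟩ := fun he => h (Quotient.exact he)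

theorem hp_ne1 : toD (phi1Fn hpPt) ≠ toD hpPt := by
  apply hp_ne
  decide

theorem hp_ne2 : toD (phi2Fn (hpL false)) ≠ toD (hpL false) := by
  apply hp_ne
  decide

theorem hp_ne3 : toD (phi3Fn (hpL true)) ≠ toD (hpL true) := by
  apply hp_ne
  decide

theorem hp_ne4 : toD (phi4Fn (hpV false)) ≠ toD (hpV false) := by
  apply hp_ne
  decide

theorem hp_ne5 : toD (phi5Fn (hpV true)) ≠ toD (hpV true) := by
  apply hp_ne
  decide

theorem hp_neM (p q : Bool × Bool) (h : toD (hpM p) = toD (hpM q)) : p = q := by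
  by_contra hne
  revert h
  apply hp_ne
  revert p q
  decide

theorem hp_PM (π : Equiv.Perm (Bool × Bool)) (p : Bool × Bool) :
    phiPiFn π (hpM p) = hpM (π p) := by
  simp only [hpM, hpaPi_eq]
  apply hp_ext
  intro u v
  fin_cases u <;> fin_cases v <;> simp [hpaPi]

theorem hp_fix12 : phi2Fn hpPt = hpPt := by
  simp only [hpPt, hpL, hpV, hpa1_eq, hpa2_eq, hpa3_eq, hpa4_eq, hpa5_eq, hpaPi_eq]
  apply hp_ext
  intro u v
  fin_cases u <;> fin_cases v <;> simp [hpa1, hpa2, hpa3, hpa4, hpa5, hpaPi]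

theorem hp_fix13 : phi3Fn hpPt = hpPt := by
  simp only [hpPt, hpL, hpV, hpa1_eq, hpa2_eq, hpa3_eq, hpa4_eq, hpa5_eq, hpaPi_eq]
  apply hp_ext
  intro u v
  fin_cases u <;> fin_cases v <;> simp [hpa1, hpa2, hpa3, hpa4, hpa5, hpaPi]

theorem hp_fix14 : phi4Fn hpPt = hpPt := by
  simp only [hpPt, hpL, hpV, hpa1_eq, hpa2_eq, hpa3_eq, hpa4_eq, hpa5_eq, hpaPi_eq]
  apply hp_ext
  intro u v
  fin_cases u <;> fin_cases v <;> simp [hpa1, hpa2, hpa3, hpa4, hpa5, hpaPi]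

theorem hp_fix15 : phi5Fn hpPt = hpPt := by
  simp only [hpPt, hpL, hpV, hpa1_eq, hpa2_eq, hpa3_eq, hpa4_eq, hpa5_eq, hpaPi_eq]
  apply hp_ext
  intro u v
  fin_cases u <;> fin_cases v <;> simp [hpa1, hpa2, hpa3, hpa4, hpa5, hpaPi]

theorem hp_fix1P (π : Equiv.Perm (Bool × Bool)) : phiPiFn π hpPt = hpPt := by
  simp only [hpPt, hpL, hpV, hpa1_eq, hpa2_eq, hpa3_eq, hpa4_eq, hpa5_eq, hpaPi_eq]
  apply hp_ext
  intro u v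
  fin_cases u <;> fin_cases v <;> simp [hpa1, hpa2, hpa3, hpa4, hpa5, hpaPi]

theorem hp_fix23 : phi3Fn (hpL false) = (hpL false) := by
  simp only [hpPt, hpL, hpV, hpa1_eq, hpa2_eq, hpa3_eq, hpa4_eq, hpa5_eq, hpaPi_eq]
  apply hp_ext
  intro u v
  fin_cases u <;> fin_cases v <;> simp [hpa1, hpa2, hpa3, hpa4, hpa5, hpaPi]

theorem hp_fix24 : phi4Fn (hpL false) = (hpL false) := by
  simp only [hpPt, hpL, hpV, hpa1_eq, hpa2_eq, hpa3_eq, hpa4_eq, hpa5_eq, hpaPi_eq]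
  apply hp_ext
  intro u v
  fin_cases u <;> fin_cases v <;> simp [hpa1, hpa2, hpa3, hpa4, hpa5, hpaPi]

theorem hp_fix25 : phi5Fn (hpL false) = (hpL false) := by
  simp only [hpPt, hpL, hpV, hpa1_eq, hpa2_eq, hpa3_eq, hpa4_eq, hpa5_eq, hpaPi_eq]
  apply hp_ext
  intro u v
  fin_cases u <;> fin_cases v <;> simp [hpa1, hpa2, hpa3, hpa4, hpa5, hpaPi]

theorem hp_fix2P (π : Equiv.Perm (Bool × Bool)) : phiPiFn π (hpL false) = (hpL false) := by
  simp only [hpPt, hpL, hpV, hpa1_eq, hpa2_eq, hpa3_eq, hpa4_eq, hpa5_eq, hpaPi_eq]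
  apply hp_ext
  intro u v
  fin_cases u <;> fin_cases v <;> simp [hpa1, hpa2, hpa3, hpa4, hpa5, hpaPi]

theorem hp_fix34 : phi4Fn (hpL true) = (hpL true) := by
  simp only [hpPt, hpL, hpV, hpa1_eq, hpa2_eq, hpa3_eq, hpa4_eq, hpa5_eq, hpaPi_eq]
  apply hp_ext
  intro u v
  fin_cases u <;> fin_cases v <;> simp [hpa1, hpa2, hpa3, hpa4, hpa5, hpaPi]

theorem hp_fix35 : phi5Fn (hpL true) = (hpL true) := by
  simp only [hpPt, hpL, hpV, hpa1_eq, hpa2_eq, hpa3_eq, hpa4_eq, hpa5_eq, hpaPi_eq]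
  apply hp_ext
  intro u v
  fin_cases u <;> fin_cases v <;> simp [hpa1, hpa2, hpa3, hpa4, hpa5, hpaPi]

theorem hp_fix3P (π : Equiv.Perm (Bool × Bool)) : phiPiFn π (hpL true) = (hpL true) := by
  simp only [hpPt, hpL, hpV, hpa1_eq, hpa2_eq, hpa3_eq, hpa4_eq, hpa5_eq, hpaPi_eq]
  apply hp_ext
  intro u v
  fin_cases u <;> fin_cases v <;> simp [hpa1, hpa2, hpa3, hpa4, hpa5, hpaPi]

theorem hp_fix45 : phi5Fn (hpV false) = (hpV false) := by
  simp only [hpPt, hpL, hpV, hpa1_eq, hpa2_eq, hpa3_eq, hpa4_eq, hpa5_eq, hpaPi_eq]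
  apply hp_ext
  intro u v
  fin_cases u <;> fin_cases v <;> simp [hpa1, hpa2, hpa3, hpa4, hpa5, hpaPi]

theorem hp_fix4P (π : Equiv.Perm (Bool × Bool)) : phiPiFn π (hpV false) = (hpV false) := by
  simp only [hpPt, hpL, hpV, hpa1_eq, hpa2_eq, hpa3_eq, hpa4_eq, hpa5_eq, hpaPi_eq]
  apply hp_ext
  intro u v
  fin_cases u <;> fin_cases v <;> simp [hpa1, hpa2, hpa3, hpa4, hpa5, hpaPi]

theorem hp_fix5P (π : Equiv.Perm (Bool × Bool)) : phiPiFn π (hpV true) = (hpV true) := by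
  simp only [hpPt, hpL, hpV, hpa1_eq, hpa2_eq, hpa3_eq, hpa4_eq, hpa5_eq, hpaPi_eq]
  apply hp_ext
  intro u v
  fin_cases u <;> fin_cases v <;> simp [hpa1, hpa2, hpa3, hpa4, hpa5, hpaPi]


def hpw {α : Type*} [Monoid α] (g : α) (b : Bool) : α := if b then g else 1

theorem hpw_not {α : Type*} [Monoid α] {g : α} (h : g * g = 1) (b : Bool) :
    g * hpw g b = hpw g (!b) := by
  cases b <;> simp [hpw, h]

theorem hpw_comm {α : Type*} [Monoid α] {g h : α} (hh : h * g = g * h) (b : Bool) :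
    h * hpw g b = hpw g b * h := by
  cases b <;> simp [hpw, hh]

theorem hpw_fix {g : D ≃o D} {f : FinDigraph → FinDigraph} (hg : ∀ G, g (toD G) = toD (f G))
    {G : FinDigraph} (h : f G = G) (b : Bool) : hpw g b (toD G) = toD G := by
  cases b <;> simp [hpw, hg, h]

theorem hpw_inj {g : D ≃o D} {f : FinDigraph → FinDigraph} (hg : ∀ G, g (toD G) = toD (f G))
    {G : FinDigraph} (h : toD (f G) ≠ toD G) {b c : Bool}
    (hbc : hpw g b (toD G) = hpw g c (toD G)) : b = c := by
  cases b <;> cases c <;> simp_all [hpw]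


abbrev HpK : Type := Bool × Bool × Bool × Bool × Bool × Equiv.Perm (Bool × Bool)

theorem hpK_card : Nat.card HpK = 768 := by
  simp [HpK, Nat.card_eq_fintype_card, Fintype.card_perm, Nat.factorial]

def hpm (g1 g2 g3 g4 g5 : D ≃o D) (gP : Equiv.Perm (Bool × Bool) → D ≃o D) (k : HpK) : D ≃o D :=
  hpw g1 k.1 * (hpw g2 k.2.1 * (hpw g3 k.2.2.1 * (hpw g4 k.2.2.2.1 *
    (hpw g5 k.2.2.2.2.1 * gP k.2.2.2.2.2))))

end helpers

/-- the subgroup `C` of order automorphisms of `(D, ⊑)` generated by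
`φ₁,…,φ₅` and all `φ_π` has exactly 768 elements. -/
theorem conjGroup_card_768
    (g1 g2 g3 g4 g5 : D ≃o D) (gP : Equiv.Perm (Bool × Bool) → D ≃o D)
    (h1 : ∀ G : FinDigraph, g1 (toD G) = toD (phi1Fn G))
    (h2 : ∀ G : FinDigraph, g2 (toD G) = toD (phi2Fn G))
    (h3 : ∀ G : FinDigraph, g3 (toD G) = toD (phi3Fn G))
    (h4 : ∀ G : FinDigraph, g4 (toD G) = toD (phi4Fn G))
    (h5 : ∀ G : FinDigraph, g5 (toD G) = toD (phi5Fn G))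
    (hP : ∀ (π : Equiv.Perm (Bool × Bool)) (G : FinDigraph),
      gP π (toD G) = toD (phiPiFn π G)) :
    Nat.card ↥(Subgroup.closure ({g1, g2, g3, g4, g5} ∪ Set.range gP : Set (D ≃o D)))
      = 768 := by
  have rels : ∀ π ρ : Equiv.Perm (Bool × Bool), g1 * g1 = 1 ∧
      g2 * g2 = 1 ∧
      g3 * g3 = 1 ∧
      g4 * g4 = 1 ∧
      g5 * g5 = 1 ∧
      g3 * g2 = g2 * g3 ∧
      g4 * g2 = g2 * g4 ∧
      g5 * g2 = g2 * g5 ∧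
      gP π * g2 = g2 * gP π ∧
      g4 * g3 = g3 * g4 ∧
      g5 * g3 = g3 * g5 ∧
      gP π * g3 = g3 * gP π ∧
      g5 * g4 = g4 * g5 ∧
      gP π * g4 = g4 * gP π ∧
      gP π * g5 = g5 * gP π ∧
      g2 * g1 = g1 * g3 ∧
      g3 * g1 = g1 * g2 ∧
      g4 * g1 = g1 * g5 ∧
      g5 * g1 = g1 * g4 ∧
      gP π * g1 = g1 * gP (sigmaSwap * π * sigmaSwap) ∧
      gP π * gP ρ = gP (π * ρ) ∧
      gP 1 = 1 := by
    intro π ρ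
    refine ⟨?_, ?_, ?_, ?_, ?_, ?_, ?_, ?_, ?_, ?_, ?_, ?_, ?_, ?_, ?_, ?_, ?_, ?_, ?_, ?_, ?_, ?_⟩
    all_goals
      refine hp_eq fun G => ?_
      have hh := hp_rels π ρ G
      simp only [RelIso.mul_apply, RelIso.one_apply, h1, h2, h3, h4, h5, hP, hh]
  obtain ⟨s1, s2, s3, s4, s5, c23, c24, c25, -, c34, c35, -, c45, -, -, d2, d3, d4, d5, -, -, oP⟩ := rels 1 1
  have c2P := fun π => (rels π 1).2.2.2.2.2.2.2.2.1
  have c3P := fun π => (rels π 1).2.2.2.2.2.2.2.2.2.2.2.1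
  have c4P := fun π => (rels π 1).2.2.2.2.2.2.2.2.2.2.2.2.2.1
  have c5P := fun π => (rels π 1).2.2.2.2.2.2.2.2.2.2.2.2.2.2.1
  have dP := fun π => (rels π 1).2.2.2.2.2.2.2.2.2.2.2.2.2.2.2.2.2.2.2.1
  have mP := fun π ρ => (rels π ρ).2.2.2.2.2.2.2.2.2.2.2.2.2.2.2.2.2.2.2.2.1
  have left0 : ∀ a2 a3 a4 a5 π, ∀ x ∈ ({g2, g3, g4, g5} ∪ Set.range gP : Set (D ≃o D)), ∃ b2 b3 b4 b5 ρ,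
      x * (hpw g2 a2 * (hpw g3 a3 * (hpw g4 a4 * (hpw g5 a5 * gP π)))) =
        hpw g2 b2 * (hpw g3 b3 * (hpw g4 b4 * (hpw g5 b5 * gP ρ))) := by
    intro a2 a3 a4 a5 π x hx
    rcases hx with (rfl | rfl | rfl | rfl) | ⟨ρ, rfl⟩
    · refine ⟨!a2, a3, a4, a5, π, ?_⟩
      rw [← mul_assoc, hpw_not s2]
    · refine ⟨a2, !a3, a4, a5, π, ?_⟩
      rw [← mul_assoc, hpw_comm c23, mul_assoc]
      congr 1
      rw [← mul_assoc, hpw_not s3]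
    · refine ⟨a2, a3, !a4, a5, π, ?_⟩
      rw [← mul_assoc, hpw_comm c24, mul_assoc]
      congr 1
      rw [← mul_assoc, hpw_comm c34, mul_assoc]
      congr 1
      rw [← mul_assoc, hpw_not s4]
    · refine ⟨a2, a3, a4, !a5, π, ?_⟩
      rw [← mul_assoc, hpw_comm c25, mul_assoc]
      congr 1
      rw [← mul_assoc, hpw_comm c35, mul_assoc]
      congr 1
      rw [← mul_assoc, hpw_comm c45, mul_assoc]
      congr 1
      rw [← mul_assoc, hpw_not s5]
    · refine ⟨a2, a3, a4, a5, ρ * π, ?_⟩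
      rw [← mul_assoc, hpw_comm (c2P ρ), mul_assoc]
      congr 1
      rw [← mul_assoc, hpw_comm (c3P ρ), mul_assoc]
      congr 1
      rw [← mul_assoc, hpw_comm (c4P ρ), mul_assoc]
      congr 1
      rw [← mul_assoc, hpw_comm (c5P ρ), mul_assoc]
      congr 1
      exact mP _ _
  have left : ∀ x ∈ ({g1, g2, g3, g4, g5} ∪ Set.range gP : Set (D ≃o D)), ∀ k,
      ∃ k', x * hpm g1 g2 g3 g4 g5 gP k = hpm g1 g2 g3 g4 g5 gP k' := by
    rintro x hx ⟨e, a2, a3, a4, a5, π⟩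
    have key : x = g1 ∨ ∃ y ∈ ({g2, g3, g4, g5} ∪ Set.range gP : Set (D ≃o D)),
        x * hpw g1 e = hpw g1 e * y := by
      cases e
      · rcases hx with (h | h) | h
        · exact Or.inl h
        · exact Or.inr ⟨x, Or.inl h, by simp [hpw]⟩
        · exact Or.inr ⟨x, Or.inr h, by simp [hpw]⟩
      · rcases hx with (rfl | rfl | rfl | rfl | rfl) | ⟨ρ, rfl⟩
        · exact Or.inl rfl
        · exact Or.inr ⟨g3, by simp, by simpa [hpw] using d2⟩
        · exact Or.inr ⟨g2, by simp, by simpa [hpw] using d3⟩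
        · exact Or.inr ⟨g5, by simp, by simpa [hpw] using d4⟩
        · exact Or.inr ⟨g4, by simp, by simpa [hpw] using d5⟩
        · exact Or.inr ⟨gP (sigmaSwap * ρ * sigmaSwap), Or.inr ⟨_, rfl⟩, by simpa [hpw] using dP ρ⟩
    rcases key with rfl | ⟨y, hy, hxy⟩
    · refine ⟨(!e, a2, a3, a4, a5, π), ?_⟩
      simp only [hpm]
      rw [← mul_assoc, hpw_not s1]
    · obtain ⟨b2, b3, b4, b5, ρ, hb⟩ := left0 a2 a3 a4 a5 π y hy
      refine ⟨(e, b2, b3, b4, b5, ρ), ?_⟩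
      simp only [hpm]
      rw [← mul_assoc, hxy, mul_assoc, hb]
  have inv : ∀ x ∈ ({g1, g2, g3, g4, g5} ∪ Set.range gP : Set (D ≃o D)),
      x⁻¹ ∈ ({g1, g2, g3, g4, g5} ∪ Set.range gP : Set (D ≃o D)) := by
    intro x hx
    rcases hx with (rfl | rfl | rfl | rfl | rfl) | ⟨ρ, rfl⟩
    · rw [inv_eq_of_mul_eq_one_left s1]; simp
    · rw [inv_eq_of_mul_eq_one_left s2]; simp
    · rw [inv_eq_of_mul_eq_one_left s3]; simp
    · rw [inv_eq_of_mul_eq_one_left s4]; simp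
    · rw [inv_eq_of_mul_eq_one_left s5]; simp
    · have : gP ρ⁻¹ * gP ρ = 1 := by rw [mP, inv_mul_cancel, oP]
      rw [inv_eq_of_mul_eq_one_left this]
      exact Or.inr ⟨_, rfl⟩
  have hset : (Subgroup.closure ({g1, g2, g3, g4, g5} ∪ Set.range gP : Set (D ≃o D)) :
      Set (D ≃o D)) = Set.range (hpm g1 g2 g3 g4 g5 gP) := by
    apply Set.Subset.antisymm
    · intro x hx
      induction hx using Subgroup.closure_induction_left with
      | one => exact ⟨(false, false, false, false, false, 1), by simp [hpm, hpw, oP]⟩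
      | mul_left x hx y hy ih =>
        obtain ⟨k, rfl⟩ := ih
        obtain ⟨k', h'⟩ := left x hx k
        exact ⟨k', h'.symm⟩
      | inv_mul_cancel x hx y hy ih =>
        obtain ⟨k, rfl⟩ := ih
        obtain ⟨k', h'⟩ := left _ (inv x hx) k
        exact ⟨k', h'.symm⟩
    · rintro _ ⟨⟨e, a2, a3, a4, a5, π⟩, rfl⟩
      have hw : ∀ g ∈ ({g1, g2, g3, g4, g5} ∪ Set.range gP : Set (D ≃o D)), ∀ b, hpw g b ∈
          Subgroup.closure ({g1, g2, g3, g4, g5} ∪ Set.range gP : Set (D ≃o D)) := by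
        intro g hg b
        cases b
        · exact Subgroup.one_mem _
        · exact Subgroup.subset_closure hg
      exact Subgroup.mul_mem _ (hw _ (by simp) _) (Subgroup.mul_mem _ (hw _ (by simp) _)
        (Subgroup.mul_mem _ (hw _ (by simp) _) (Subgroup.mul_mem _ (hw _ (by simp) _)
        (Subgroup.mul_mem _ (hw _ (by simp) _) (Subgroup.subset_closure (Or.inr ⟨_, rfl⟩))))))
  have hinj : Function.Injective (hpm g1 g2 g3 g4 g5 gP) := by
    rintro ⟨e, a2, a3, a4, a5, π⟩ ⟨e', b2, b3, b4, b5, ρ⟩ h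
    simp only [hpm] at h
    obtain rfl : e = e' := by
      have t := congrArg (fun f : D ≃o D => f (toD hpPt)) h
      simp only [RelIso.mul_apply, hP, hp_fix1P, hpw_fix h2 hp_fix12, hpw_fix h3 hp_fix13, hpw_fix h4 hp_fix14, hpw_fix h5 hp_fix15] at t
      exact hpw_inj h1 hp_ne1 t
    replace h := mul_left_cancel h
    obtain rfl : a2 = b2 := by
      have t := congrArg (fun f : D ≃o D => f (toD (hpL false))) h
      simp only [RelIso.mul_apply, hP, hp_fix2P, hpw_fix h3 hp_fix23, hpw_fix h4 hp_fix24, hpw_fix h5 hp_fix25] at t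
      exact hpw_inj h2 hp_ne2 t
    replace h := mul_left_cancel h
    obtain rfl : a3 = b3 := by
      have t := congrArg (fun f : D ≃o D => f (toD (hpL true))) h
      simp only [RelIso.mul_apply, hP, hp_fix3P, hpw_fix h4 hp_fix34, hpw_fix h5 hp_fix35] at t
      exact hpw_inj h3 hp_ne3 t
    replace h := mul_left_cancel h
    obtain rfl : a4 = b4 := by
      have t := congrArg (fun f : D ≃o D => f (toD (hpV false))) h
      simp only [RelIso.mul_apply, hP, hp_fix4P, hpw_fix h5 hp_fix45] at t
      exact hpw_inj h4 hp_ne4 t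
    replace h := mul_left_cancel h
    obtain rfl : a5 = b5 := by
      have t := congrArg (fun f : D ≃o D => f (toD (hpV true))) h
      simp only [RelIso.mul_apply, hP, hp_fix5P] at t
      exact hpw_inj h5 hp_ne5 t
    replace h := mul_left_cancel h
    obtain rfl : π = ρ := by
      apply Equiv.ext
      intro p
      have t := congrArg (fun f : D ≃o D => f (toD (hpM p))) h
      simp only [hP, hp_PM] at t
      exact hp_neM _ _ t
    rfl
  have hc : Nat.card ↥(Subgroup.closure ({g1, g2, g3, g4, g5} ∪ Set.range gP : Set (D ≃o D)))
      = Nat.card (Set.range (hpm g1 g2 g3 g4 g5 gP)) := by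
    rw [← hset]
    rfl
  rw [hc, Nat.card_congr (Equiv.ofInjective _ hinj).symm, hpK_card]
end

section
/- Let C be the subgroup of the group of order automorphisms of (D, ⊑) generated by φ₁, φ₂, φ₃, φ₄, φ₅ and all φ_π (π a permutation of Bool × Bool), and let S be the subgroup generated by φ₂, φ₃, φ₄, φ₅ and all φ_π. Then C is the internal semidirect product of S by the subgroup generated by φ₁; that is: S is a normal subgroup of C, S ∩ ⟨φ₁⟩ is trivial, and S·⟨φ₁⟩ = C. -/
theorem sd_toD_congr {G H : FinDigraph} (h : G = H) : toD G = toD H := by rw [h]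

theorem sd_ext {n : ℕ} {p : 0 < n} {a b : Fin n → Fin n → Bool} (h : ∀ u v, a u v = b u v) :
    (⟨n, p, a⟩ : FinDigraph) = ⟨n, p, b⟩ := by
  have : a = b := by funext u v; exact h u v
  rw [this]

theorem sd_11 (G : FinDigraph) : phi1Fn (phi1Fn G) = G := by
  obtain ⟨n, p, a⟩ := G
  simp only [phi1Fn]
  refine sd_ext ?_
  intro u v
  by_cases h : u = v <;> simp [phi1Fn, h]

theorem sd_12 (G : FinDigraph) : phi1Fn (phi2Fn G) = phi3Fn (phi1Fn G) := by
  obtain ⟨n, p, a⟩ := G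
  simp only [phi1Fn, phi2Fn, phi3Fn]
  refine sd_ext ?_
  intro u v
  by_cases h : u = v
  · subst h; simp [phi1Fn, phi2Fn]
  · simp [phi1Fn, phi2Fn, h, Ne.symm h]

theorem sd_14 (G : FinDigraph) : phi1Fn (phi4Fn G) = phi5Fn (phi1Fn G) := by
  obtain ⟨n, p, a⟩ := G
  simp only [phi1Fn, phi4Fn, phi5Fn]
  refine sd_ext ?_
  intro u v
  by_cases h : u = v
  · subst h; simp [phi1Fn, phi4Fn]
  · simp [phi1Fn, phi4Fn, h, Ne.symm h]

theorem sd_1P (π : Equiv.Perm (Bool × Bool)) (G : FinDigraph) :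
    phi1Fn (phiPiFn π G) = phiPiFn (sigmaSwap * π * sigmaSwap) (phi1Fn G) := by
  obtain ⟨n, p, a⟩ := G
  simp only [phi1Fn, phiPiFn]
  refine sd_ext ?_
  intro u v
  by_cases h : u = v
  · subst h; simp [phi1Fn, phiPiFn]
  · have h' : ¬ v = u := fun e => h e.symm
    rcases Bool.eq_false_or_eq_true (a u u) with hu | hu <;>
      rcases Bool.eq_false_or_eq_true (a v v) with hv | hv <;>
      simp [phi1Fn, phiPiFn, sigmaSwap, h, h', hu, hv]

def sdLoop : FinDigraph := ⟨1, Nat.one_pos, fun _ _ => true⟩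

theorem sd_loop_ne : toD (phi1Fn sdLoop) ≠ toD sdLoop := by
  intro h
  obtain ⟨e, he⟩ := Quotient.exact h
  have h0 := he (0 : Fin 1) (0 : Fin 1)
  simp [phi1Fn, sdLoop] at h0

theorem sd_l2 : phi2Fn sdLoop = sdLoop := by
  simp only [phi2Fn, sdLoop]
  refine sd_ext ?_
  intro u v
  simp [Subsingleton.elim u v]

theorem sd_l3 : phi3Fn sdLoop = sdLoop := by
  simp only [phi3Fn, sdLoop]
  refine sd_ext ?_
  intro u v
  simp [Subsingleton.elim u v]

theorem sd_l4 : phi4Fn sdLoop = sdLoop := by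
  simp only [phi4Fn, sdLoop]
  refine sd_ext ?_
  intro u v
  simp [Subsingleton.elim u v]

theorem sd_l5 : phi5Fn sdLoop = sdLoop := by
  simp only [phi5Fn, sdLoop]
  refine sd_ext ?_
  intro u v
  simp [Subsingleton.elim u v]

theorem sd_lP (π : Equiv.Perm (Bool × Bool)) : phiPiFn π sdLoop = sdLoop := by
  simp only [phiPiFn, sdLoop]
  refine sd_ext ?_
  intro u v
  simp [Subsingleton.elim u v]

open Pointwise in
/-- `C` is the internal semidirect product of `S` by `⟨φ₁⟩`: `S` is normal
in `C`, `S ∩ ⟨φ₁⟩` is trivial, and `S·⟨φ₁⟩ = C`. -/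
theorem internal_semidirect_product
    (g1 g2 g3 g4 g5 : D ≃o D) (gP : Equiv.Perm (Bool × Bool) → D ≃o D)
    (h1 : ∀ G : FinDigraph, g1 (toD G) = toD (phi1Fn G))
    (h2 : ∀ G : FinDigraph, g2 (toD G) = toD (phi2Fn G))
    (h3 : ∀ G : FinDigraph, g3 (toD G) = toD (phi3Fn G))
    (h4 : ∀ G : FinDigraph, g4 (toD G) = toD (phi4Fn G))
    (h5 : ∀ G : FinDigraph, g5 (toD G) = toD (phi5Fn G))
    (hP : ∀ (π : Equiv.Perm (Bool × Bool)) (G : FinDigraph),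
      gP π (toD G) = toD (phiPiFn π G))
    (C S T : Subgroup (D ≃o D))
    (hC : C = Subgroup.closure ({g1, g2, g3, g4, g5} ∪ Set.range gP : Set (D ≃o D)))
    (hS : S = Subgroup.closure ({g2, g3, g4, g5} ∪ Set.range gP : Set (D ≃o D)))
    (hT : T = Subgroup.closure {g1}) :
    S ≤ C ∧ T ≤ C ∧ (S.subgroupOf C).Normal ∧ S ⊓ T = ⊥ ∧
      (↑S * ↑T : Set (D ≃o D)) = ↑C := by
  have e11 : g1 * g1 = 1 := by
    ext x
    induction x using Quotient.inductionOn with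
    | h G =>
      change g1 (g1 (toD G)) = toD G
      rw [h1, h1, sd_11]
  have inv1 : g1⁻¹ = g1 := inv_eq_of_mul_eq_one_left e11
  have e12 : g1 * g2 = g3 * g1 := by
    ext x
    induction x using Quotient.inductionOn with
    | h G =>
      change g1 (g2 (toD G)) = g3 (g1 (toD G))
      rw [h1, h2, h1, h3, sd_12]
  have e14 : g1 * g4 = g5 * g1 := by
    ext x
    induction x using Quotient.inductionOn with
    | h G =>
      change g1 (g4 (toD G)) = g5 (g1 (toD G))
      rw [h1, h4, h1, h5, sd_14]
  have e1P : ∀ π, g1 * gP π = gP (sigmaSwap * π * sigmaSwap) * g1 := by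
    intro π
    ext x
    induction x using Quotient.inductionOn with
    | h G =>
      change g1 (gP π (toD G)) = gP _ (g1 (toD G))
      rw [h1, hP, h1, hP, sd_1P]
  have c12 : g1 * g2 * g1⁻¹ = g3 := by rw [e12]; group
  have c13 : g1 * g3 * g1⁻¹ = g2 := by
    rw [← c12, inv1]
    calc _ = (g1 * g1) * g2 * (g1 * g1) := by simp only [mul_assoc]
      _ = g2 := by simp [e11]
  have c14 : g1 * g4 * g1⁻¹ = g5 := by rw [e14]; group
  have c15 : g1 * g5 * g1⁻¹ = g4 := by
    rw [← c14, inv1]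
    calc _ = (g1 * g1) * g4 * (g1 * g1) := by simp only [mul_assoc]
      _ = g4 := by simp [e11]
  have c1P : ∀ π, g1 * gP π * g1⁻¹ = gP (sigmaSwap * π * sigmaSwap) := by
    intro π; rw [e1P]; group
  have m2 : g2 ∈ S := by rw [hS]; exact Subgroup.subset_closure (by simp)
  have m3 : g3 ∈ S := by rw [hS]; exact Subgroup.subset_closure (by simp)
  have m4 : g4 ∈ S := by rw [hS]; exact Subgroup.subset_closure (by simp)
  have m5 : g5 ∈ S := by rw [hS]; exact Subgroup.subset_closure (by simp)
  have mP : ∀ π, gP π ∈ S := by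
    intro π; rw [hS]; exact Subgroup.subset_closure (by simp)
  have conj : ∀ x ∈ S, g1 * x * g1⁻¹ ∈ S := by
    have : S ≤ S.comap (MulAut.conj g1).toMonoidHom := by
      conv_lhs => rw [hS]
      rw [Subgroup.closure_le]
      rintro x ((rfl | rfl | rfl | rfl) | ⟨π, rfl⟩)
      · change g1 * _ * g1⁻¹ ∈ S
        rw [c12]; exact m3
      · change g1 * _ * g1⁻¹ ∈ S
        rw [c13]; exact m2
      · change g1 * _ * g1⁻¹ ∈ S
        rw [c14]; exact m5
      · change g1 * _ * g1⁻¹ ∈ S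
        rw [c15]; exact m4
      · change g1 * _ * g1⁻¹ ∈ S
        rw [c1P]; exact mP _
    exact this
  have n1 : g1 ∈ Subgroup.normalizer (S : Set (D ≃o D)) := by
    rw [Subgroup.mem_normalizer_iff]
    intro x
    refine ⟨conj x, fun hx => ?_⟩
    have := conj _ hx
    rw [inv1] at this
    have e : g1 * (g1 * x * g1) * g1 = x := by
      calc _ = (g1 * g1) * x * (g1 * g1) := by simp only [mul_assoc]
        _ = x := by simp [e11]
    rwa [e] at this
  have hTN : T ≤ Subgroup.normalizer (S : Set (D ≃o D)) := by
    rw [hT, Subgroup.closure_le]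
    rintro x rfl
    exact n1
  have hSC : S ≤ C := by
    rw [hS, hC]
    apply Subgroup.closure_mono
    apply Set.union_subset_union_left
    intro x hx
    exact Or.inr hx
  have hTC : T ≤ C := by
    rw [hT, hC]
    apply Subgroup.closure_mono
    rintro x rfl
    exact Or.inl (Or.inl rfl)
  have hsup : C = S ⊔ T := by
    apply le_antisymm _ (sup_le hSC hTC)
    rw [hC, Subgroup.closure_le]
    have hl : S ≤ S ⊔ T := le_sup_left
    rintro x ((rfl | rfl | rfl | rfl | rfl) | ⟨π, rfl⟩)
    · exact (le_sup_right : T ≤ S ⊔ T) (by rw [hT]; exact Subgroup.subset_closure rfl)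
    · exact hl m2
    · exact hl m3
    · exact hl m4
    · exact hl m5
    · exact hl (mP π)
  refine ⟨hSC, hTC, ?_, ?_, ?_⟩
  · apply Subgroup.normal_subgroupOf_of_le_normalizer
    rw [hsup]
    exact sup_le Subgroup.le_normalizer hTN
  · rw [eq_bot_iff]
    rintro x ⟨hxS, hxT⟩
    have fix : x (toD sdLoop) = toD sdLoop := by
      have : S ≤ MulAction.stabilizer (D ≃o D) (toD sdLoop) := by
        rw [hS, Subgroup.closure_le]
        rintro y ((rfl | rfl | rfl | rfl) | ⟨π, rfl⟩)
        · exact (h2 _).trans (sd_toD_congr sd_l2)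
        · exact (h3 _).trans (sd_toD_congr sd_l3)
        · exact (h4 _).trans (sd_toD_congr sd_l4)
        · exact (h5 _).trans (sd_toD_congr sd_l5)
        · exact (hP π _).trans (sd_toD_congr (sd_lP π))
      exact this hxS
    have hx : x = 1 ∨ x = g1 := by
      have key : ∀ y ∈ Subgroup.closure {g1}, y = 1 ∨ y = g1 := by
        intro y hy
        induction hy using Subgroup.closure_induction with
        | mem y hy => exact Or.inr hy
        | one => exact Or.inl rfl
        | mul a b _ _ ha hb => rcases ha with rfl | rfl <;> rcases hb with rfl | rfl <;> simp [e11]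
        | inv a _ ha => rcases ha with rfl | rfl <;> simp [inv1]
      exact key x (hT ▸ hxT)
    rcases hx with rfl | rfl
    · exact Subgroup.mem_bot.2 rfl
    · rw [h1] at fix
      exact absurd fix sd_loop_ne
  · rw [hsup]
    exact (Subgroup.coe_mul_of_right_le_normalizer_left S T hTN).symm
end

section
/- Let S be the subgroup of the group of order automorphisms of (D, ⊑) generated by φ₂, φ₃, φ₄, φ₅ and all φ_π (π a permutation of Bool × Bool). Then S is isomorphic to (ZMod 2)⁴ × Perm(Bool × Bool); in particular S is the internal direct product of the cyclic subgroups ⟨φ₂⟩, ⟨φ₃⟩, ⟨φ₄⟩, ⟨φ₅⟩ (each of order 2) and the subgroup {φ_π : π a permutation of Bool × Bool}. -/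
namespace SDP

theorem dext {n : ℕ} {p : 0 < n} {a b : Fin n → Fin n → Bool} (h : ∀ u v, a u v = b u v) :
    FinDigraph.mk n p a = FinDigraph.mk n p b := by
  have : a = b := funext fun u => funext fun v => h u v
  rw [this]

theorem phi22 (G : FinDigraph) : phi2Fn (phi2Fn G) = G := by
  unfold phi2Fn
  apply dext
  intro u v
  by_cases h : u = v
  · subst h; simp
  · have h' : v ≠ u := fun e => h e.symm
    simp only [h, h', ne_eq, not_true, not_false_eq_true, true_and, false_and, if_false]
    generalize G.adj u v = a, G.adj v u = b, G.adj u u = c, G.adj v v = d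
    revert a b c d; decide

theorem phi33 (G : FinDigraph) : phi3Fn (phi3Fn G) = G := by
  unfold phi3Fn
  apply dext
  intro u v
  by_cases h : u = v
  · subst h; simp
  · have h' : v ≠ u := fun e => h e.symm
    simp only [h, h', ne_eq, not_true, not_false_eq_true, true_and, false_and, if_false]
    generalize G.adj u v = a, G.adj v u = b, G.adj u u = c, G.adj v v = d
    revert a b c d; decide

theorem phi44 (G : FinDigraph) : phi4Fn (phi4Fn G) = G := by
  unfold phi4Fn
  apply dext
  intro u v
  by_cases h : u = v
  · subst h; simp
  · have h' : v ≠ u := fun e => h e.symm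
    simp only [h, h', ne_eq, not_true, not_false_eq_true, true_and, false_and, if_false]
    generalize G.adj u v = a, G.adj v u = b, G.adj u u = c, G.adj v v = d
    revert a b c d; decide

theorem phi55 (G : FinDigraph) : phi5Fn (phi5Fn G) = G := by
  unfold phi5Fn
  apply dext
  intro u v
  by_cases h : u = v
  · subst h; simp
  · have h' : v ≠ u := fun e => h e.symm
    simp only [h, h', ne_eq, not_true, not_false_eq_true, true_and, false_and, if_false]
    generalize G.adj u v = a, G.adj v u = b, G.adj u u = c, G.adj v v = d
    revert a b c d; decide

theorem phi23 (G : FinDigraph) : phi2Fn (phi3Fn G) = phi3Fn (phi2Fn G) := by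
  unfold phi2Fn phi3Fn
  apply dext
  intro u v
  by_cases h : u = v
  · subst h; simp
  · have h' : v ≠ u := fun e => h e.symm
    simp only [h, h', ne_eq, not_true, not_false_eq_true, true_and, false_and, if_false]
    generalize G.adj u v = a, G.adj v u = b, G.adj u u = c, G.adj v v = d
    revert a b c d; decide

theorem phi24 (G : FinDigraph) : phi2Fn (phi4Fn G) = phi4Fn (phi2Fn G) := by
  unfold phi2Fn phi4Fn
  apply dext
  intro u v
  by_cases h : u = v
  · subst h; simp
  · have h' : v ≠ u := fun e => h e.symm
    simp only [h, h', ne_eq, not_true, not_false_eq_true, true_and, false_and, if_false]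
    generalize G.adj u v = a, G.adj v u = b, G.adj u u = c, G.adj v v = d
    revert a b c d; decide

theorem phi25 (G : FinDigraph) : phi2Fn (phi5Fn G) = phi5Fn (phi2Fn G) := by
  unfold phi2Fn phi5Fn
  apply dext
  intro u v
  by_cases h : u = v
  · subst h; simp
  · have h' : v ≠ u := fun e => h e.symm
    simp only [h, h', ne_eq, not_true, not_false_eq_true, true_and, false_and, if_false]
    generalize G.adj u v = a, G.adj v u = b, G.adj u u = c, G.adj v v = d
    revert a b c d; decide

theorem phi34 (G : FinDigraph) : phi3Fn (phi4Fn G) = phi4Fn (phi3Fn G) := by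
  unfold phi3Fn phi4Fn
  apply dext
  intro u v
  by_cases h : u = v
  · subst h; simp
  · have h' : v ≠ u := fun e => h e.symm
    simp only [h, h', ne_eq, not_true, not_false_eq_true, true_and, false_and, if_false]
    generalize G.adj u v = a, G.adj v u = b, G.adj u u = c, G.adj v v = d
    revert a b c d; decide

theorem phi35 (G : FinDigraph) : phi3Fn (phi5Fn G) = phi5Fn (phi3Fn G) := by
  unfold phi3Fn phi5Fn
  apply dext
  intro u v
  by_cases h : u = v
  · subst h; simp
  · have h' : v ≠ u := fun e => h e.symm
    simp only [h, h', ne_eq, not_true, not_false_eq_true, true_and, false_and, if_false]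
    generalize G.adj u v = a, G.adj v u = b, G.adj u u = c, G.adj v v = d
    revert a b c d; decide

theorem phi45 (G : FinDigraph) : phi4Fn (phi5Fn G) = phi5Fn (phi4Fn G) := by
  unfold phi4Fn phi5Fn
  apply dext
  intro u v
  by_cases h : u = v
  · subst h; simp
  · have h' : v ≠ u := fun e => h e.symm
    simp only [h, h', ne_eq, not_true, not_false_eq_true, true_and, false_and, if_false]
    generalize G.adj u v = a, G.adj v u = b, G.adj u u = c, G.adj v v = d
    revert a b c d; decide

theorem phi2P (π : Equiv.Perm (Bool × Bool)) (G : FinDigraph) :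
    phi2Fn (phiPiFn π G) = phiPiFn π (phi2Fn G) := by
  unfold phi2Fn phiPiFn
  apply dext
  intro u v
  by_cases h : u = v
  · subst h; simp
  · have h' : v ≠ u := fun e => h e.symm
    cases hc : G.adj u u <;> cases hd : G.adj v v <;> simp [h, h', hc, hd]

theorem phi3P (π : Equiv.Perm (Bool × Bool)) (G : FinDigraph) :
    phi3Fn (phiPiFn π G) = phiPiFn π (phi3Fn G) := by
  unfold phi3Fn phiPiFn
  apply dext
  intro u v
  by_cases h : u = v
  · subst h; simp
  · have h' : v ≠ u := fun e => h e.symm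
    cases hc : G.adj u u <;> cases hd : G.adj v v <;> simp [h, h', hc, hd]

theorem phi4P (π : Equiv.Perm (Bool × Bool)) (G : FinDigraph) :
    phi4Fn (phiPiFn π G) = phiPiFn π (phi4Fn G) := by
  unfold phi4Fn phiPiFn
  apply dext
  intro u v
  by_cases h : u = v
  · subst h; simp
  · have h' : v ≠ u := fun e => h e.symm
    cases hc : G.adj u u <;> cases hd : G.adj v v <;> simp [h, h', hc, hd]

theorem phi5P (π : Equiv.Perm (Bool × Bool)) (G : FinDigraph) :
    phi5Fn (phiPiFn π G) = phiPiFn π (phi5Fn G) := by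
  unfold phi5Fn phiPiFn
  apply dext
  intro u v
  by_cases h : u = v
  · subst h; simp
  · have h' : v ≠ u := fun e => h e.symm
    cases hc : G.adj u u <;> cases hd : G.adj v v <;> simp [h, h', hc, hd]

theorem phiPP (π σ : Equiv.Perm (Bool × Bool)) (G : FinDigraph) :
    phiPiFn π (phiPiFn σ G) = phiPiFn (π * σ) G := by
  unfold phiPiFn
  apply dext
  intro u v
  by_cases h : u = v
  · subst h; simp
  · have h' : v ≠ u := fun e => h e.symm
    cases hc : G.adj u u <;> cases hd : G.adj v v <;> simp [h, h', hc, hd]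

abbrev M := Multiplicative (ZMod 2)
abbrev P := Equiv.Perm (Bool × Bool)

/-- The map from the group of order two given by an involution. -/
def inv2 {Γ : Type*} [Group Γ] (g : Γ) (h : g ^ 2 = 1) : M →* Γ where
  toFun x := g ^ (Multiplicative.toAdd x).val
  map_one' := by simp
  map_mul' x y := by
    have key : ∀ a b : ZMod 2, g ^ (a + b).val = g ^ a.val * g ^ b.val := by
      intro a b
      rw [← pow_add, ZMod.val_add]
      conv_rhs => rw [← Nat.mod_add_div (a.val + b.val) 2, pow_add, pow_mul, h, one_pow, mul_one]
    exact key _ _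

abbrev X := M × M × M × M × P

/-- coordinate triviality subgroups -/
def N (i : Fin 5) : Subgroup X :=
  ![(⊥ : Subgroup M).prod ⊤,
    (⊤ : Subgroup M).prod ((⊥ : Subgroup M).prod ⊤),
    (⊤ : Subgroup M).prod ((⊤ : Subgroup M).prod ((⊥ : Subgroup M).prod ⊤)),
    (⊤ : Subgroup M).prod ((⊤ : Subgroup M).prod ((⊤ : Subgroup M).prod ((⊥ : Subgroup M).prod ⊤))),
    (⊤ : Subgroup M).prod ((⊤ : Subgroup M).prod ((⊤ : Subgroup M).prod
      ((⊤ : Subgroup M).prod (⊥ : Subgroup P))))] i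

theorem N0 (x : X) : x ∈ N 0 ↔ x.1 = 1 := by simp [N, Subgroup.mem_prod]
theorem N1 (x : X) : x ∈ N 1 ↔ x.2.1 = 1 := by simp [N, Subgroup.mem_prod]
theorem N2 (x : X) : x ∈ N 2 ↔ x.2.2.1 = 1 := by simp [N, Subgroup.mem_prod]
theorem N3 (x : X) : x ∈ N 3 ↔ x.2.2.2.1 = 1 := by simp [N, Subgroup.mem_prod]
theorem N4 (x : X) : x ∈ N 4 ↔ x.2.2.2.2 = 1 := by simp [N, Subgroup.mem_prod]

/-- coordinate subgroups -/
def C (i : Fin 5) : Subgroup X := ⨅ j, ⨅ (_ : j ≠ i), N j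

theorem mem_C {i : Fin 5} {x : X} : x ∈ C i ↔ ∀ j, j ≠ i → x ∈ N j := by
  simp [C, Subgroup.mem_iInf]

theorem allN {x : X} (h : ∀ j, x ∈ N j) : x = 1 := by
  obtain ⟨a, b, c, d, π⟩ := x
  have h0 := (N0 _).1 (h 0)
  have h1 := (N1 _).1 (h 1)
  have h2 := (N2 _).1 (h 2)
  have h3 := (N3 _).1 (h 3)
  have h4 := (N4 _).1 (h 4)
  dsimp only at h0 h1 h2 h3 h4
  subst h0 h1 h2 h3 h4
  rfl

theorem mem0 (a : M) : ((a, 1, 1, 1, 1) : X) ∈ C 0 := by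
  rw [mem_C]; intro j hj
  fin_cases j
  · exact absurd rfl hj
  · exact (N1 _).2 rfl
  · exact (N2 _).2 rfl
  · exact (N3 _).2 rfl
  · exact (N4 _).2 rfl

theorem mem1 (a : M) : ((1, a, 1, 1, 1) : X) ∈ C 1 := by
  rw [mem_C]; intro j hj
  fin_cases j
  · exact (N0 _).2 rfl
  · exact absurd rfl hj
  · exact (N2 _).2 rfl
  · exact (N3 _).2 rfl
  · exact (N4 _).2 rfl

theorem mem2 (a : M) : ((1, 1, a, 1, 1) : X) ∈ C 2 := by
  rw [mem_C]; intro j hj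
  fin_cases j
  · exact (N0 _).2 rfl
  · exact (N1 _).2 rfl
  · exact absurd rfl hj
  · exact (N3 _).2 rfl
  · exact (N4 _).2 rfl

theorem mem3 (a : M) : ((1, 1, 1, a, 1) : X) ∈ C 3 := by
  rw [mem_C]; intro j hj
  fin_cases j
  · exact (N0 _).2 rfl
  · exact (N1 _).2 rfl
  · exact (N2 _).2 rfl
  · exact absurd rfl hj
  · exact (N4 _).2 rfl

theorem mem4 (a : P) : ((1, 1, 1, 1, a) : X) ∈ C 4 := by
  rw [mem_C]; intro j hj
  fin_cases j
  · exact (N0 _).2 rfl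
  · exact (N1 _).2 rfl
  · exact (N2 _).2 rfl
  · exact (N3 _).2 rfl
  · exact absurd rfl hj

theorem hCN {i j : Fin 5} (h : i ≠ j) : C j ≤ N i := fun _ hx => mem_C.1 hx i h

theorem hCNbot {i : Fin 5} {x : X} (h : x ∈ C i) (h' : x ∈ N i) : x = 1 := by
  refine allN fun j => ?_
  by_cases e : j = i
  · rw [e]; exact h'
  · exact mem_C.1 h j e

theorem hCcomm {i j : Fin 5} (hij : i ≠ j) {x y : X} (hx : x ∈ C i) (hy : y ∈ C j) :
    Commute x y := by
  have hP : x ∈ N 4 ∨ y ∈ N 4 := by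
    by_cases e : 4 = i
    · exact Or.inr (mem_C.1 hy 4 (e ▸ hij))
    · exact Or.inl (mem_C.1 hx 4 e)
  rw [N4, N4] at hP
  have h5 : x.2.2.2.2 * y.2.2.2.2 = y.2.2.2.2 * x.2.2.2.2 := by
    rcases hP with h | h <;> rw [h] <;> simp
  exact Prod.ext (mul_comm _ _) (Prod.ext (mul_comm _ _) (Prod.ext (mul_comm _ _)
    (Prod.ext (mul_comm _ _) h5)))

theorem abstract_part {Γ : Type*} [Group Γ] (g2 g3 g4 g5 : Γ) (gP : P →* Γ)
    (s2 : g2 ^ 2 = 1) (s3 : g3 ^ 2 = 1) (s4 : g4 ^ 2 = 1) (s5 : g5 ^ 2 = 1)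
    (c23 : Commute g2 g3) (c24 : Commute g2 g4) (c25 : Commute g2 g5)
    (c34 : Commute g3 g4) (c35 : Commute g3 g5) (c45 : Commute g4 g5)
    (c2 : ∀ π, Commute g2 (gP π)) (c3 : ∀ π, Commute g3 (gP π))
    (c4 : ∀ π, Commute g4 (gP π)) (c5 : ∀ π, Commute g5 (gP π))
    (inj : ∀ (a b c d : ZMod 2) (π : P),
      g2 ^ a.val * (g3 ^ b.val * (g4 ^ c.val * (g5 ^ d.val * gP π))) = 1 →
      a = 0 ∧ b = 0 ∧ c = 0 ∧ d = 0 ∧ π = 1)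
    (S : Subgroup Γ) (hS : S = Subgroup.closure ({g2, g3, g4, g5} ∪ Set.range gP : Set Γ))
    (K : Fin 5 → Subgroup Γ)
    (hK : K = ![Subgroup.closure {g2}, Subgroup.closure {g3}, Subgroup.closure {g4},
      Subgroup.closure {g5}, Subgroup.closure (Set.range gP)]) :
    Nonempty (↥S ≃* Multiplicative (ZMod 2 × ZMod 2 × ZMod 2 × ZMod 2) × P) ∧
    (Nat.card ↥(K 0) = 2 ∧ Nat.card ↥(K 1) = 2 ∧ Nat.card ↥(K 2) = 2 ∧
      Nat.card ↥(K 3) = 2) ∧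
    (∀ i j : Fin 5, i ≠ j → ∀ x ∈ K i, ∀ y ∈ K j, Commute x y) ∧
    iSupIndep K ∧ (⨆ i, K i) = S := by
  let Φ5 : M × P →* Γ := (inv2 g5 s5).noncommCoprod gP (fun x π => (c5 π).pow_left _)
  let Φ4 : M × M × P →* Γ := (inv2 g4 s4).noncommCoprod Φ5
    (fun x y => (c45.pow_pow _ _).mul_right ((c4 _).pow_left _))
  let Φ3 : M × M × M × P →* Γ := (inv2 g3 s3).noncommCoprod Φ4
    (fun x y => (c34.pow_pow _ _).mul_right ((c35.pow_pow _ _).mul_right ((c3 _).pow_left _)))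
  let Φ : M × M × M × M × P →* Γ := (inv2 g2 s2).noncommCoprod Φ3
    (fun x y => (c23.pow_pow _ _).mul_right ((c24.pow_pow _ _).mul_right
      ((c25.pow_pow _ _).mul_right ((c2 _).pow_left _))))
  have hΦ : ∀ a b c d π, Φ (a, b, c, d, π) =
      g2 ^ (Multiplicative.toAdd a).val * (g3 ^ (Multiplicative.toAdd b).val *
      (g4 ^ (Multiplicative.toAdd c).val * (g5 ^ (Multiplicative.toAdd d).val * gP π))) :=
    fun a b c d π => rfl
  have hinj : Function.Injective Φ := by
    rw [injective_iff_map_eq_one]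
    rintro ⟨a, b, c, d, π⟩ h
    rw [hΦ] at h
    obtain ⟨ha, hb, hc, hd, hπ⟩ := inj _ _ _ _ _ h
    rw [toAdd_eq_zero] at ha hb hc hd
    subst ha hb hc hd hπ
    rfl
  let t : M := Multiplicative.ofAdd 1
  have v1 : (1 : ZMod 2).val = 1 := rfl
  have e2 : Φ (t, 1, 1, 1, 1) = g2 := by rw [hΦ]; simp [t, v1]
  have e3 : Φ (1, t, 1, 1, 1) = g3 := by rw [hΦ]; simp [t, v1]
  have e4 : Φ (1, 1, t, 1, 1) = g4 := by rw [hΦ]; simp [t, v1]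
  have e5 : Φ (1, 1, 1, t, 1) = g5 := by rw [hΦ]; simp [t, v1]
  have eP : ∀ π, Φ (1, 1, 1, 1, π) = gP π := fun π => by rw [hΦ]; simp
  have ht : t ≠ 1 := by decide
  have n2 : g2 ≠ 1 := fun h => ht (by
    have := hinj ((e2.trans h).trans Φ.map_one.symm); exact congrArg (fun x => x.1) this)
  have n3 : g3 ≠ 1 := fun h => ht (by
    have := hinj ((e3.trans h).trans Φ.map_one.symm); exact congrArg (fun x => x.2.1) this)
  have n4 : g4 ≠ 1 := fun h => ht (by
    have := hinj ((e4.trans h).trans Φ.map_one.symm); exact congrArg (fun x => x.2.2.1) this)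
  have n5 : g5 ≠ 1 := fun h => ht (by
    have := hinj ((e5.trans h).trans Φ.map_one.symm); exact congrArg (fun x => x.2.2.2.1) this)
  have hKC : ∀ i, K i ≤ (C i).map Φ := by
    intro i
    subst hK
    fin_cases i
    · refine (Subgroup.closure_le _).2 (Set.singleton_subset_iff.2 ⟨_, ?_, e2⟩)
      exact mem0 _
    · refine (Subgroup.closure_le _).2 (Set.singleton_subset_iff.2 ⟨_, ?_, e3⟩)
      exact mem1 _
    · refine (Subgroup.closure_le _).2 (Set.singleton_subset_iff.2 ⟨_, ?_, e4⟩)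
      exact mem2 _
    · refine (Subgroup.closure_le _).2 (Set.singleton_subset_iff.2 ⟨_, ?_, e5⟩)
      exact mem3 _
    · refine (Subgroup.closure_le _).2 ?_
      rintro _ ⟨π, rfl⟩
      refine ⟨_, ?_, eP π⟩
      exact mem4 _
  have hsup : (⨆ i, K i) = S := by
    apply le_antisymm
    · refine iSup_le fun i => ?_
      subst hK hS
      fin_cases i <;> apply Subgroup.closure_mono <;> intro x hx <;> simp at hx <;> simp [hx]
    · have hle := fun i => le_iSup K i
      have h0 := hle 0
      have h1 := hle 1
      have h2 := hle 2
      have h3 := hle 3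
      have h4 := hle 4
      generalize (⨆ i, K i) = T at *
      subst hK hS
      rw [Subgroup.closure_le]
      rintro x ((rfl | rfl | rfl | rfl) | hx)
      · exact h0 (Subgroup.subset_closure rfl)
      · exact h1 (Subgroup.subset_closure rfl)
      · exact h2 (Subgroup.subset_closure rfl)
      · exact h3 (Subgroup.subset_closure rfl)
      · exact h4 (Subgroup.subset_closure hx)
  have hrange : S = Φ.range := by
    apply le_antisymm
    · rw [← hsup]
      exact iSup_le fun i => (hKC i).trans (Subgroup.map_le_range _ _)
    · rintro _ ⟨⟨a, b, c, d, π⟩, rfl⟩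
      rw [hΦ, hS]
      refine mul_mem (pow_mem (Subgroup.subset_closure ?_) _) (mul_mem (pow_mem
        (Subgroup.subset_closure ?_) _) (mul_mem (pow_mem (Subgroup.subset_closure ?_) _)
        (mul_mem (pow_mem (Subgroup.subset_closure ?_) _) (Subgroup.subset_closure ?_)))) <;> simp
  refine ⟨⟨?_⟩, ⟨?_, ?_, ?_, ?_⟩, ?_, ?_, hsup⟩
  · let e1 : ↥S ≃* M × M × M × M × P :=
      (MulEquiv.subgroupCongr hrange).trans (MonoidHom.ofInjective hinj).symm
    let e2 : M × M × M × M × P ≃* Multiplicative (ZMod 2 × ZMod 2 × ZMod 2 × ZMod 2) × P :=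
      { toFun := fun x => (Multiplicative.ofAdd (Multiplicative.toAdd x.1,
          Multiplicative.toAdd x.2.1, Multiplicative.toAdd x.2.2.1,
          Multiplicative.toAdd x.2.2.2.1), x.2.2.2.2)
        invFun := fun y => (Multiplicative.ofAdd (Multiplicative.toAdd y.1).1,
          Multiplicative.ofAdd (Multiplicative.toAdd y.1).2.1,
          Multiplicative.ofAdd (Multiplicative.toAdd y.1).2.2.1,
          Multiplicative.ofAdd (Multiplicative.toAdd y.1).2.2.2, y.2)
        left_inv := fun x => rfl
        right_inv := fun y => rfl
        map_mul' := fun x y => rfl }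
    exact e1.trans e2
  · subst hK
    change Nat.card (Subgroup.closure {g2}) = 2
    rw [← Subgroup.zpowers_eq_closure, Nat.card_zpowers, orderOf_eq_prime s2 n2]
  · subst hK
    change Nat.card (Subgroup.closure {g3}) = 2
    rw [← Subgroup.zpowers_eq_closure, Nat.card_zpowers, orderOf_eq_prime s3 n3]
  · subst hK
    change Nat.card (Subgroup.closure {g4}) = 2
    rw [← Subgroup.zpowers_eq_closure, Nat.card_zpowers, orderOf_eq_prime s4 n4]
  · subst hK
    change Nat.card (Subgroup.closure {g5}) = 2
    rw [← Subgroup.zpowers_eq_closure, Nat.card_zpowers, orderOf_eq_prime s5 n5]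
  · intro i j hij x hx y hy
    obtain ⟨a, ha, rfl⟩ := hKC i hx
    obtain ⟨b, hb, rfl⟩ := hKC j hy
    exact (hCcomm hij ha hb).map Φ
  · intro i
    rw [Subgroup.disjoint_def]
    intro x hx hx'
    have hle : (⨆ j, ⨆ (_ : j ≠ i), K j) ≤ (N i).map Φ :=
      iSup_le fun j => iSup_le fun hj => (hKC j).trans (Subgroup.map_mono (hCN hj.symm))
    obtain ⟨a, ha, rfl⟩ := hKC i hx
    obtain ⟨b, hb, hab⟩ := hle hx'
    obtain rfl := hinj hab
    rw [hCNbot ha hb, map_one]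

theorem ind {p : D → Prop} (h : ∀ G, p (toD G)) : ∀ x, p x := fun x => Quotient.inductionOn x h

theorem toD_eq {G H : FinDigraph} (h : toD G = toD H) : FinDigraph.Iso G H := Quotient.exact h

theorem cast2 : ∀ a : ZMod 2, a = 0 ∨ a = 1 := by decide

/-- test graph: looped vertex 0, loopless vertex 1, of given type -/
def tP (t : Bool × Bool) : FinDigraph :=
  ⟨2, by norm_num, fun u v => if u = 0 then (if v = 0 then true else t.1)
    else (if v = 0 then t.2 else false)⟩
/-- test graph: two vertices with loop status b, no edges -/
def tE (b : Bool) : FinDigraph := ⟨2, by norm_num, fun u v => if u = v then b else false⟩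
/-- test graph: out-star -/
def tO (b : Bool) : FinDigraph :=
  ⟨3, by norm_num, fun u v => if u = v then b else decide (u = 0)⟩

end SDP

namespace SDP

theorem f2P (t : Bool × Bool) : phi2Fn (tP t) = tP t := by
  unfold phi2Fn tP; apply dext; revert t; decide
theorem f3P (t : Bool × Bool) : phi3Fn (tP t) = tP t := by
  unfold phi3Fn tP; apply dext; revert t; decide
theorem f4P (t : Bool × Bool) : phi4Fn (tP t) = tP t := by
  unfold phi4Fn tP; apply dext; revert t; decide
theorem f5P (t : Bool × Bool) : phi5Fn (tP t) = tP t := by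
  unfold phi5Fn tP; apply dext; revert t; decide
theorem fPP (π : P) (t : Bool × Bool) : phiPiFn π (tP t) = tP (π t) := by
  unfold phiPiFn tP; apply dext
  intro u v
  fin_cases u <;> fin_cases v <;> simp
theorem isoP {s t : Bool × Bool} (h : toD (tP s) = toD (tP t)) : s = t := by
  obtain ⟨e, he⟩ := toD_eq h
  change Fin 2 ≃ Fin 2 at e
  have key : ∀ (e : Fin 2 ≃ Fin 2) (s t : Bool × Bool),
    (∀ u v : Fin 2, (tP t).adj (e u) (e v) = (tP s).adj u v) → s = t := by
    unfold tP; decide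
  exact key e s t he

theorem f3E : phi3Fn (tE false) = tE false := by
  unfold phi3Fn tE; apply dext; decide
theorem f4E (b : Bool) : phi4Fn (tE b) = tE b := by
  unfold phi4Fn tE; apply dext; revert b; decide
theorem f5E (b : Bool) : phi5Fn (tE b) = tE b := by
  unfold phi5Fn tE; apply dext; revert b; decide
theorem fPE (π : P) (b : Bool) : phiPiFn π (tE b) = tE b := by
  unfold phiPiFn tE; apply dext
  intro u v
  by_cases h : u = v <;> cases b <;> simp [h]
theorem n2E : toD (phi2Fn (tE false)) ≠ toD (tE false) := by
  intro h
  obtain ⟨e, he⟩ := toD_eq h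
  change Fin 2 ≃ Fin 2 at e
  have key : ¬ ∃ e : Fin 2 ≃ Fin 2,
    (∀ u v : Fin 2, (tE false).adj (e u) (e v) = (phi2Fn (tE false)).adj u v) := by
    unfold phi2Fn tE; decide
  exact key ⟨e, he⟩
theorem n3E : toD (phi3Fn (tE true)) ≠ toD (tE true) := by
  intro h
  obtain ⟨e, he⟩ := toD_eq h
  change Fin 2 ≃ Fin 2 at e
  have key : ¬ ∃ e : Fin 2 ≃ Fin 2,
    (∀ u v : Fin 2, (tE true).adj (e u) (e v) = (phi3Fn (tE true)).adj u v) := by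
    unfold phi3Fn tE; decide
  exact key ⟨e, he⟩

theorem f5O : phi5Fn (tO false) = tO false := by
  unfold phi5Fn tO; apply dext; decide
theorem fPO (π : P) (b : Bool) : phiPiFn π (tO b) = tO b := by
  unfold phiPiFn tO; apply dext
  intro u v
  by_cases h : u = v <;> cases b <;> simp [h]
theorem n4O : toD (phi4Fn (tO false)) ≠ toD (tO false) := by
  intro h
  obtain ⟨e, he⟩ := toD_eq h
  change Fin 3 ≃ Fin 3 at e
  have key : ¬ ∃ e : Fin 3 ≃ Fin 3,
    (∀ u v : Fin 3, (tO false).adj (e u) (e v) = (phi4Fn (tO false)).adj u v) := by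
    unfold phi4Fn tO; decide
  exact key ⟨e, he⟩
theorem n5O : toD (phi5Fn (tO true)) ≠ toD (tO true) := by
  intro h
  obtain ⟨e, he⟩ := toD_eq h
  change Fin 3 ≃ Fin 3 at e
  have key : ¬ ∃ e : Fin 3 ≃ Fin 3,
    (∀ u v : Fin 3, (tO true).adj (e u) (e v) = (phi5Fn (tO true)).adj u v) := by
    unfold phi5Fn tO; decide
  exact key ⟨e, he⟩

theorem powfix (g : D ≃o D) (x : D) (h : g x = x) (a : ZMod 2) : (g ^ a.val) x = x := by
  rcases cast2 a with rfl | rfl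
  · rfl
  · exact (congrArg (fun f : D ≃o D => f x) (pow_one g)).trans h

theorem powne (g : D ≃o D) (x : D) (h : g x ≠ x) (a : ZMod 2) (h' : (g ^ a.val) x = x) :
    a = 0 := by
  rcases cast2 a with rfl | rfl
  · rfl
  · exact absurd ((congrArg (fun f : D ≃o D => f x) (pow_one g)).symm.trans h') h

end SDP

/-- `S = ⟨φ₂, φ₃, φ₄, φ₅, {φ_π}⟩` is isomorphic to
`(ZMod 2)⁴ × Perm (Bool × Bool)`; in particular it is the internal direct product of the
cyclic subgroups `⟨φ₂⟩, ⟨φ₃⟩, ⟨φ₄⟩, ⟨φ₅⟩` (each of order 2) and the subgroup `{φ_π}`. -/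
theorem S_internal_direct_product
    (g2 g3 g4 g5 : D ≃o D) (gP : Equiv.Perm (Bool × Bool) → D ≃o D)
    (h2 : ∀ G : FinDigraph, g2 (toD G) = toD (phi2Fn G))
    (h3 : ∀ G : FinDigraph, g3 (toD G) = toD (phi3Fn G))
    (h4 : ∀ G : FinDigraph, g4 (toD G) = toD (phi4Fn G))
    (h5 : ∀ G : FinDigraph, g5 (toD G) = toD (phi5Fn G))
    (hP : ∀ (π : Equiv.Perm (Bool × Bool)) (G : FinDigraph),
      gP π (toD G) = toD (phiPiFn π G))
    (S : Subgroup (D ≃o D))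
    (hS : S = Subgroup.closure ({g2, g3, g4, g5} ∪ Set.range gP : Set (D ≃o D)))
    (K : Fin 5 → Subgroup (D ≃o D))
    (hK : K = ![Subgroup.closure {g2}, Subgroup.closure {g3}, Subgroup.closure {g4},
      Subgroup.closure {g5}, Subgroup.closure (Set.range gP)]) :
    Nonempty (↥S ≃*
      Multiplicative (ZMod 2 × ZMod 2 × ZMod 2 × ZMod 2) × Equiv.Perm (Bool × Bool)) ∧
    (Nat.card ↥(K 0) = 2 ∧ Nat.card ↥(K 1) = 2 ∧ Nat.card ↥(K 2) = 2 ∧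
      Nat.card ↥(K 3) = 2) ∧
    (∀ i j : Fin 5, i ≠ j → ∀ x ∈ K i, ∀ y ∈ K j, Commute x y) ∧
    iSupIndep K ∧ (⨆ i, K i) = S := by
  have mulext : ∀ {f g : D ≃o D}, (∀ G, f (toD G) = g (toD G)) → f = g := by
    intro f g h
    ext x
    exact SDP.ind (p := fun x => f x = g x) h x
  let gPh : SDP.P →* (D ≃o D) := MonoidHom.mk' gP (by
    intro π σ
    apply mulext
    intro G
    rw [RelIso.mul_apply, hP, hP, hP, SDP.phiPP])
  refine SDP.abstract_part g2 g3 g4 g5 gPh ?_ ?_ ?_ ?_ ?_ ?_ ?_ ?_ ?_ ?_ ?_ ?_ ?_ ?_ ?_ S hS K hK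
  · rw [pow_two]; apply mulext; intro G
    rw [RelIso.mul_apply, h2, h2, SDP.phi22]; rfl
  · rw [pow_two]; apply mulext; intro G
    rw [RelIso.mul_apply, h3, h3, SDP.phi33]; rfl
  · rw [pow_two]; apply mulext; intro G
    rw [RelIso.mul_apply, h4, h4, SDP.phi44]; rfl
  · rw [pow_two]; apply mulext; intro G
    rw [RelIso.mul_apply, h5, h5, SDP.phi55]; rfl
  · apply mulext; intro G
    rw [RelIso.mul_apply, RelIso.mul_apply, h2, h3, h2, h3, SDP.phi23]
  · apply mulext; intro G
    rw [RelIso.mul_apply, RelIso.mul_apply, h2, h4, h2, h4, SDP.phi24]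
  · apply mulext; intro G
    rw [RelIso.mul_apply, RelIso.mul_apply, h2, h5, h2, h5, SDP.phi25]
  · apply mulext; intro G
    rw [RelIso.mul_apply, RelIso.mul_apply, h3, h4, h3, h4, SDP.phi34]
  · apply mulext; intro G
    rw [RelIso.mul_apply, RelIso.mul_apply, h3, h5, h3, h5, SDP.phi35]
  · apply mulext; intro G
    rw [RelIso.mul_apply, RelIso.mul_apply, h4, h5, h4, h5, SDP.phi45]
  · intro π; change Commute g2 (gP π); apply mulext; intro G
    rw [RelIso.mul_apply, RelIso.mul_apply, h2, hP, h2, hP, SDP.phi2P]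
  · intro π; change Commute g3 (gP π); apply mulext; intro G
    rw [RelIso.mul_apply, RelIso.mul_apply, h3, hP, h3, hP, SDP.phi3P]
  · intro π; change Commute g4 (gP π); apply mulext; intro G
    rw [RelIso.mul_apply, RelIso.mul_apply, h4, hP, h4, hP, SDP.phi4P]
  · intro π; change Commute g5 (gP π); apply mulext; intro G
    rw [RelIso.mul_apply, RelIso.mul_apply, h5, hP, h5, hP, SDP.phi5P]
  · intro a b c d π h
    have H : ∀ x : D, (g2 ^ a.val) ((g3 ^ b.val) ((g4 ^ c.val) ((g5 ^ d.val) (gP π x)))) = x :=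
      fun x => congrArg (fun f : D ≃o D => f x) h
    have hπ : π = 1 := by
      ext1 t
      have := H (toD (SDP.tP t))
      rw [hP, SDP.fPP, SDP.powfix g5 _ (by rw [h5, SDP.f5P]),
        SDP.powfix g4 _ (by rw [h4, SDP.f4P]), SDP.powfix g3 _ (by rw [h3, SDP.f3P]),
        SDP.powfix g2 _ (by rw [h2, SDP.f2P])] at this
      exact SDP.isoP this
    have ha : a = 0 := by
      have := H (toD (SDP.tE false))
      rw [hP, SDP.fPE, SDP.powfix g5 _ (by rw [h5, SDP.f5E]),
        SDP.powfix g4 _ (by rw [h4, SDP.f4E]), SDP.powfix g3 _ (by rw [h3, SDP.f3E])] at this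
      exact SDP.powne g2 _ (by rw [h2]; exact SDP.n2E) a this
    subst ha
    have hb : b = 0 := by
      have := H (toD (SDP.tE true))
      rw [hP, SDP.fPE, SDP.powfix g5 _ (by rw [h5, SDP.f5E]),
        SDP.powfix g4 _ (by rw [h4, SDP.f4E])] at this
      exact SDP.powne g3 _ (by rw [h3]; exact SDP.n3E) b this
    subst hb
    have hc : c = 0 := by
      have := H (toD (SDP.tO false))
      rw [hP, SDP.fPO, SDP.powfix g5 _ (by rw [h5, SDP.f5O])] at this
      exact SDP.powne g4 _ (by rw [h4]; exact SDP.n4O) c this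
    subst hc
    have hd : d = 0 := by
      have := H (toD (SDP.tO true))
      rw [hP, SDP.fPO] at this
      exact SDP.powne g5 _ (by rw [h5]; exact SDP.n5O) d this
    exact ⟨rfl, rfl, rfl, hd, hπ⟩
end
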